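/- arXiv:1905.06813 — 4 statements merged into one kernel-verified Lean document; each statement's English description precedes it below -/
import Mathlib

section
/- Let n ≥ 2 be an integer and let R_n = ℤ[q_{i,j} : i,j ∈ {1,…,n}, i ≠ j] be the commutative polynomial ring in indeterminates q_{i,j}. Let M be the square matrix, with rows and columns indexed by the symmetric group S_n, whose (σ,τ) entry is v_n(σ,τ). Then det M = ∏_{I ⊆ {1,…,n}, |I| ≥ 2} (1 − ∏_{{i,j} ⊆ I, i < j} q_{i,j} q_{j,i})^{(|I|−2)!·(n−|I|+1)!}. -/
/-- The polynomial ring `ℤ[q_{i,j} : i,j ∈ {1,…,n}, i ≠ j]`. -/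
abbrev QRing (n : ℕ) : Type :=
  MvPolynomial {p : Fin n × Fin n // p.1 ≠ p.2} ℤ

/-- The variable `q_{i,j}` for `i ≠ j` (junk value `0` on the diagonal,
which is never used). -/
noncomputable def q {n : ℕ} (i j : Fin n) : QRing n :=
  if h : i ≠ j then MvPolynomial.X ⟨(i, j), h⟩ else 0

/-- The Aguiar–Mahajan pairing `v_n(σ,τ)`: the product of `q_{σ(i),σ(j)}` over
all pairs `i < j` with `τ⁻¹(σ(i)) > τ⁻¹(σ(j))`. -/
noncomputable def vn {n : ℕ} (σ τ : Equiv.Perm (Fin n)) : QRing n :=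
  ∏ p ∈ Finset.univ.filter
      (fun p : Fin n × Fin n => p.1 < p.2 ∧ τ⁻¹ (σ p.2) < τ⁻¹ (σ p.1)),
    q (σ p.1) (σ p.2)

/-!
Let the operator `permOp w π` carry the weights of the entries `(σ, σ * π)`, so that the matrix is
the sum of these operators over all `π`. They multiply whenever no pair of positions is inverted
twice. Writing every permutation as one of the permutations fixing the positions `0, …, k` times a
cycle `k ↦ ⋯ ↦ k + i ↦ k`, for `k = 0, 1, …` in turn, factors the matrix into sums
`∑ i ≤ l, C i` of cycle operators. These satisfy
`(∑ i ≤ l + 1, C i) * (1 - C (l + 1)) = (1 - C 1 * C (l + 1)) * ∑ i ≤ l, C i`,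
and both `C (l + 1)` and `C 1 * C (l + 1)` are weighted right translations by a cycle: on each coset
of the group generated by the cycle, `1 -` such a translation has determinant `1 -` the product of
the weights along the coset, which depends only on the set of letters in the positions
`k, …, k + l + 1`. The factors `1 - C (l + 1)` can be cancelled when the weights are indeterminates,
and arbitrary weights are obtained from these by specialization.
-/

open Finset Equiv

section WeightedCycle

theorem fin_ne_add_one_of_le {m : ℕ} {i j : Fin (m + 1)} (hj : j ≠ 0) (hji : j ≤ i) :
    j ≠ i + 1 := by
  rintro rfl
  induction i using Fin.lastCases with
  | last => simp at hj
  | cast i => simp [Fin.le_def] at hji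

theorem mul_ite_prod_Ici_add_one {M : Type*} [CommMonoid M] {m : ℕ} (f : Fin (m + 1) → M)
    (i : Fin (m + 1)) :
    f i * (if i + 1 = 0 then 1 else ∏ j ∈ Ici (i + 1), f j) = ∏ j ∈ Ici i, f j := by
  induction i using Fin.lastCases with
  | last =>
    rw [if_pos (Fin.last_add_one m), ← Fin.top_eq_last, Ici_top, prod_singleton, mul_one]
  | cast i =>
    have : Ici i.castSucc = insert i.castSucc (Ici i.succ) := by
      ext j
      simp only [mem_Ici, mem_insert, Fin.le_def, Fin.ext_iff, Fin.val_castSucc, Fin.val_succ]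
      omega
    rw [this, prod_insert (by simp [Fin.le_def]), Fin.coeSucc_eq_succ, if_neg i.succ_ne_zero]

theorem det_one_sub_weightedCycle {R : Type*} [CommRing R] {m : ℕ} (f : Fin (m + 1) → R) :
    (1 - Matrix.of fun i j : Fin (m + 1) => if j = i + 1 then f i else 0).det =
      1 - ∏ i, f i := by
  set M : Matrix (Fin (m + 1)) (Fin (m + 1)) R :=
    1 - Matrix.of fun i j => if j = i + 1 then f i else 0 with hM
  -- The vector of suffix products is annihilated by every row of `M` but the first. Replacing the
  -- first column of `M` by its image, as in Cramer's rule, leaves an upper triangular matrix.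
  let x : Fin (m + 1) → R := fun i => if i = 0 then 1 else ∏ j ∈ Ici i, f j
  have mulVec_x : M.mulVec x = Pi.single 0 (1 - ∏ i, f i) := by
    ext i
    have : M.mulVec x i = x i - f i * x (i + 1) := by
      rw [hM, Matrix.sub_mulVec, Matrix.one_mulVec, Pi.sub_apply]
      simp [Matrix.mulVec, dotProduct]
    rw [this, mul_ite_prod_Ici_add_one]
    rcases eq_or_ne i 0 with rfl | hi
    · simp [x, ← bot_eq_zero]
    · simp [x, hi]
  have triangular : (M.updateCol 0 (M.mulVec x)).IsUpperTriangular := by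
    intro i j (hji : j < i)
    rw [mulVec_x, Matrix.updateCol_apply]
    split_ifs with hj
    · exact Pi.single_eq_of_ne (by rintro rfl; simp at hji) _
    · simp [hM, fin_ne_add_one_of_le hj hji.le, Matrix.one_apply_ne' hji.ne]
  have diag_succ (i : Fin m) : M i.succ i.succ = 1 := by
    simp [hM, fin_ne_add_one_of_le i.succ_ne_zero le_rfl]
  calc M.det = M.det * x 0 := by simp [x]
    _ = (M.updateCol 0 (M.mulVec x)).det := by
      rw [← Matrix.cramer_apply, Matrix.cramer_eq_adjugate_mulVec, Matrix.mulVec_mulVec,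
        Matrix.adjugate_mul, Matrix.smul_mulVec, Matrix.one_mulVec, Pi.smul_apply, smul_eq_mul]
    _ = 1 - ∏ i, f i := by
      rw [Matrix.det_of_isUpperTriangular triangular, Fin.prod_univ_succ, mulVec_x]
      simp [diag_succ]

end WeightedCycle

section Cosets

theorem apply_mul_pow_of_invariant {G β : Type*} [Monoid G] {g : G} {J : G → β}
    (hJ : ∀ x, J (x * g) = J x) (x : G) (i : ℕ) : J (x * g ^ i) = J x := by
  induction i with
  | zero => simp
  | succ i ih => rw [pow_succ, ← mul_assoc, hJ, ih]

variable {G : Type*} [Group G]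

theorem bijective_out_mul_pow [Finite G] (g : G) :
    Function.Bijective fun p : Fin (orderOf g) × (G ⧸ Subgroup.zpowers g) =>
      p.2.out * g ^ (p.1 : ℕ) := by
  constructor
  · rintro ⟨i, c⟩ ⟨j, d⟩ h
    have h' : c.out * g ^ (i : ℕ) = d.out * g ^ (j : ℕ) := h
    have hcd : c = d := by
      have := congrArg (QuotientGroup.mk (s := Subgroup.zpowers g)) h'
      rwa [QuotientGroup.mk_mul_of_mem _ (Subgroup.npow_mem_zpowers g _),
        QuotientGroup.mk_mul_of_mem _ (Subgroup.npow_mem_zpowers g _),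
        QuotientGroup.out_eq', QuotientGroup.out_eq'] at this
    subst hcd
    have := pow_injOn_Iio_orderOf i.2 j.2 (mul_left_cancel h')
    simp [Fin.ext this]
  · intro x
    obtain ⟨k, hk⟩ : (QuotientGroup.mk (s := Subgroup.zpowers g) x).out⁻¹ * x ∈
        Subgroup.zpowers g := by
      rw [← QuotientGroup.eq, QuotientGroup.out_eq']
    obtain ⟨i, hi, hik⟩ : ∃ i < orderOf g, g ^ i = g ^ k := by
      classical
      have := mem_zpowers_iff_mem_range_orderOf.1 (⟨k, rfl⟩ : g ^ k ∈ Subgroup.zpowers g)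
      simpa using this
    refine ⟨⟨⟨i, hi⟩, QuotientGroup.mk x⟩, ?_⟩
    simp only [hik]
    rw [show g ^ k = _ from hk, mul_inv_cancel_left]

theorem orderOf_mul_card_out_fiber [Fintype G] {β : Type*} [DecidableEq β] {g : G} {J : G → β}
    (hJ : ∀ x, J (x * g) = J x) (b : β) :
    orderOf g * #{c : G ⧸ Subgroup.zpowers g | J c.out = b} = #{x | J x = b} := by
  rw [← Fintype.card_fin (orderOf g), ← card_univ, ← card_product]
  refine card_bij (fun p _ => p.2.out * g ^ (p.1 : ℕ)) ?_ ?_ ?_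
  · simp [apply_mul_pow_of_invariant hJ]
  · exact fun _ _ _ _ h => (bijective_out_mul_pow g).1 h
  · intro x hx
    obtain ⟨p, rfl⟩ := (bijective_out_mul_pow g).2 x
    exact ⟨p, by simpa [apply_mul_pow_of_invariant hJ] using hx, rfl⟩

end Cosets

section TranslationMatrix

variable {G R : Type*} [Group G] [DecidableEq G]

/-- The weighted matrix of right translation by `g`: row `x` has the single entry `f x`,
in column `x * g`. -/
def translationMatrix [Zero R] (g : G) (f : G → R) : Matrix G G R :=
  Matrix.of fun x y => if y = x * g then f x else 0

theorem translationMatrix_apply [Zero R] (g : G) (f : G → R) (x y : G) :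
    translationMatrix g f x y = if y = x * g then f x else 0 := rfl

theorem translationMatrix_one [Zero R] [One R] :
    translationMatrix (1 : G) (fun _ => (1 : R)) = 1 := by
  ext x y
  simp [translationMatrix_apply, Matrix.one_apply, eq_comm]

theorem translationMatrix_mul [Fintype G] [NonUnitalNonAssocSemiring R] (g h : G) (f f' : G → R) :
    translationMatrix g f * translationMatrix h f' =
      translationMatrix (g * h) fun x => f x * f' (x * g) := by
  ext x y
  rw [Matrix.mul_apply, sum_eq_single (x * g)] <;>
    simp +contextual [translationMatrix_apply, mul_assoc]

theorem det_one_sub_translationMatrix [Fintype G] [CommRing R] (g : G) (f : G → R) :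
    (1 - translationMatrix g f).det =
      ∏ c : G ⧸ Subgroup.zpowers g, (1 - ∏ i ∈ range (orderOf g), f (c.out * g ^ i)) := by
  obtain ⟨m, hm⟩ : ∃ m, orderOf g = m + 1 := Nat.exists_eq_succ_of_ne_zero (orderOf_pos g).ne'
  have hbij := bijective_out_mul_pow g
  rw [hm] at hbij ⊢
  have hpow (i : Fin (m + 1)) : g ^ ((i + 1 : Fin (m + 1)) : ℕ) = g ^ (i : ℕ) * g := by
    rw [← pow_succ, pow_eq_pow_iff_modEq, hm, Fin.val_add]
    simp [Nat.ModEq]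
  rw [← Matrix.det_submatrix_equiv_self (Equiv.ofBijective _ hbij)]
  have : (1 - translationMatrix g f).submatrix (Equiv.ofBijective _ hbij)
      (Equiv.ofBijective _ hbij) = Matrix.blockDiagonal fun c : G ⧸ Subgroup.zpowers g =>
        1 - Matrix.of fun i j : Fin (m + 1) =>
          if j = i + 1 then f (c.out * g ^ (i : ℕ)) else 0 := by
    ext ⟨i, c⟩ ⟨j, d⟩
    have h1 := hbij.1.eq_iff (a := (i, c)) (b := (j, d))
    have h2 := hbij.1.eq_iff (a := (j, d)) (b := (i + 1, c))
    simp only [hpow, ← mul_assoc, Prod.mk.injEq] at h1 h2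
    simp only [Matrix.submatrix_apply, Equiv.ofBijective_apply, Matrix.sub_apply,
      Matrix.one_apply, translationMatrix_apply, Matrix.blockDiagonal_apply, Matrix.of_apply,
      h1, h2]
    by_cases hcd : c = d
    · subst hcd; simp
    · simp [hcd, Ne.symm hcd]
  rw [this, Matrix.det_blockDiagonal]
  simp_rw [det_one_sub_weightedCycle, Finset.prod_range]

theorem det_one_sub_translationMatrix_of_invariant [Fintype G] [CommRing R] {β : Type*}
    [DecidableEq β] {g : G} {f : G → R} {J : G → β} (hJ : ∀ x, J (x * g) = J x)
    {H : β → R} (hH : ∀ x, ∏ i ∈ range (orderOf g), f (x * g ^ i) = H (J x)) {s : Finset β}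
    (hs : ∀ x, J x ∈ s) {N : ℕ} (hN : ∀ b ∈ s, #{x | J x = b} = orderOf g * N) :
    (1 - translationMatrix g f).det = ∏ b ∈ s, (1 - H b) ^ N := by
  simp_rw [det_one_sub_translationMatrix, hH]
  rw [← prod_fiberwise_of_maps_to fun (c : G ⧸ Subgroup.zpowers g) _ => hs c.out]
  refine prod_congr rfl fun b hb => ?_
  have hcard : #{c : G ⧸ Subgroup.zpowers g | J c.out = b} = N :=
    Nat.eq_of_mul_eq_mul_left (orderOf_pos g) ((orderOf_mul_card_out_fiber hJ b).trans (hN b hb))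
  rw [prod_congr rfl (g := fun _ => 1 - H b) (by simp +contextual), prod_const, hcard]

end TranslationMatrix

section Permutations

theorem orderOf_eq_card_of_isCycleOn {α : Type*} {f : Perm α} {s : Finset α} (hf : f.IsCycleOn s)
    (hs : s.Nonempty) (hfix : ∀ x ∉ s, f x = x) : orderOf f = #s := by
  obtain ⟨a, ha⟩ := hs
  apply Nat.dvd_antisymm
  · rw [orderOf_dvd_iff_pow_eq_one]
    ext x
    by_cases hx : x ∈ s
    · exact hf.pow_card_apply hx
    · exact Function.IsFixedPt.perm_pow (hfix x hx) _
  · rw [← hf.pow_apply_eq ha, pow_orderOf_eq_one, Perm.one_apply]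

theorem prod_range_pow_apply_of_isCycleOn {α M : Type*} [CommMonoid M] {f : Perm α}
    {s : Finset α} (hf : f.IsCycleOn s) {a : α} (ha : a ∈ s) (F : α → M) :
    ∏ i ∈ range #s, F ((f ^ i) a) = ∏ b ∈ s, F b := by
  refine prod_bij (fun i _ => (f ^ i) a) ?_ ?_ ?_ fun _ _ => rfl
  · intro i _
    exact hf.1.mapsTo.perm_pow i ha
  · intro i hi j hj h
    exact ((hf.pow_apply_eq_pow_apply ha).1 h).eq_of_lt_of_lt (mem_range.1 hi) (mem_range.1 hj)
  · intro b hb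
    obtain ⟨i, hi, h⟩ := hf.exists_pow_eq ha hb
    exact ⟨i, mem_range.2 hi, h⟩

variable {α : Type*} [DecidableEq α]

theorem image_perm_eq_iff {σ : Perm α} {s t : Finset α} :
    s.image σ = t ↔ ∀ a, σ a ∈ t ↔ a ∈ s := by
  constructor
  · rintro rfl a
    simp
  · intro h
    ext b
    obtain ⟨a, rfl⟩ := σ.surjective b
    simp [h]

theorem card_perm_image_eq_self [Fintype α] (s : Finset α) :
    #{σ : Perm α | s.image σ = s} = (#s).factorial * (Fintype.card α - #s).factorial := by
  have key := DomMulAct.stabilizer_card fun a : α => decide (a ∈ s)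
  have card_false : Fintype.card {a // decide (a ∈ s) = false} = Fintype.card α - #s := by
    simp [Fintype.card_subtype_compl]
  rw [Fintype.prod_bool, card_false, Fintype.card_subtype] at key
  simpa [image_perm_eq_iff, funext_iff] using key

theorem card_perm_image_eq [Fintype α] {s t : Finset α} (h : #s = #t) :
    #{σ : Perm α | s.image σ = t} = (#s).factorial * (Fintype.card α - #s).factorial := by
  let e : s ≃ t := equivOfCardEq h
  obtain ⟨ρ, rfl⟩ : ∃ ρ : Perm α, s.image ρ = t :=
    ⟨e.extendSubtype, image_perm_eq_iff.2 fun a =>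
      ⟨not_imp_not.1 (e.extendSubtype_not_mem a), e.extendSubtype_mem a⟩⟩
  have mem_image_iff (b : α) : b ∈ s.image ρ ↔ ρ⁻¹ b ∈ s := by
    simp [Perm.inv_def, ← Equiv.eq_symm_apply]
  rw [← card_perm_image_eq_self]
  refine card_equiv (Equiv.mulLeft ρ⁻¹) fun σ => ?_
  simp only [mem_filter_univ, image_perm_eq_iff, Equiv.coe_mulLeft, Perm.mul_apply, mem_image_iff]

theorem det_one_sub_translationMatrix_of_image [Fintype α] {R : Type*} [CommRing R] {g : Perm α}
    {f : Perm α → R} {A : Finset α} (hA : A.image g = A) {H : Finset α → R}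
    (hH : ∀ σ, ∏ i ∈ range (orderOf g), f (σ * g ^ i) = H (A.image σ)) {N : ℕ}
    (hN : (#A).factorial * (Fintype.card α - #A).factorial = orderOf g * N) :
    (1 - translationMatrix g f).det = ∏ I ∈ powersetCard #A univ, (1 - H I) ^ N := by
  refine det_one_sub_translationMatrix_of_invariant (J := fun σ : Perm α => A.image σ) ?_ hH ?_ ?_
  · intro σ
    rw [Perm.coe_mul, ← image_image, hA]
  · intro σ
    simp [mem_powersetCard, card_image_of_injective _ σ.injective]
  · intro I hI
    rw [card_perm_image_eq (mem_powersetCard.1 hI).2.symm, hN]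

end Permutations

section PairWeight

variable {α M : Type*} [CommMonoid M]

/-- The product of the weights of all ordered pairs of distinct elements of `I`. -/
def pairWeight [DecidableEq α] (w : α → α → M) (I : Finset α) : M :=
  ∏ a ∈ I, ∏ b ∈ I.erase a, w a b

theorem map_pairWeight [DecidableEq α] {N F : Type*} [CommMonoid N] [FunLike F M N]
    [MonoidHomClass F M N] (φ : F) (w : α → α → M) (I : Finset α) :
    φ (pairWeight w I) = pairWeight (fun a b => φ (w a b)) I := by
  simp only [pairWeight, map_prod]

theorem pairWeight_insert [DecidableEq α] (w : α → α → M) {c : α} {I : Finset α} (hc : c ∉ I) :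
    pairWeight w (insert c I) = ∏ a ∈ I, (w c a * w a c * ∏ b ∈ I.erase a, w a b) := by
  rw [pairWeight, prod_insert hc, erase_insert hc, ← prod_mul_distrib]
  refine prod_congr rfl fun a ha => ?_
  have hca : c ≠ a := by
    rintro rfl
    exact hc ha
  rw [erase_insert_of_ne hca, prod_insert (by simp [hc]), mul_assoc]

theorem pairWeight_eq_prod_lt [LinearOrder α] (w : α → α → M) (I : Finset α) :
    pairWeight w I = ∏ p ∈ I ×ˢ I with p.1 < p.2, w p.1 p.2 * w p.2 p.1 := by
  have prod_ne : pairWeight w I = ∏ p ∈ I ×ˢ I with p.1 ≠ p.2, w p.1 p.2 := by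
    rw [pairWeight, prod_filter, prod_product]
    refine prod_congr rfl fun a _ => ?_
    rw [← prod_filter, filter_ne]
  have filter_ne_eq : {p ∈ I ×ˢ I | p.1 ≠ p.2} =
      {p ∈ I ×ˢ I | p.1 < p.2} ∪ {p ∈ I ×ˢ I | p.2 < p.1} := by
    rw [← filter_or]
    exact filter_congr fun p _ => lt_or_lt_iff_ne.symm
  rw [prod_ne, filter_ne_eq, prod_union (disjoint_filter.2 fun p _ h => h.not_gt),
    prod_mul_distrib]
  congr 1
  exact prod_equiv (Equiv.prodComm _ _) (by simp [and_comm]) (by simp)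

end PairWeight

section Telescoping

theorem sum_range_mul_one_sub {A : Type*} [Ring A] {C : ℕ → A} {l : ℕ} (h0 : C 0 = 1)
    (hC : ∀ i ≤ l, C (i + 1) * C (l + 1) = C 1 * C (l + 1) * C i) :
    (∑ i ∈ range (l + 2), C i) * (1 - C (l + 1)) =
      (1 - C 1 * C (l + 1)) * ∑ i ∈ range (l + 1), C i := by
  have shifted : (∑ i ∈ range (l + 1), C (i + 1)) * C (l + 1) =
      C 1 * C (l + 1) * ∑ i ∈ range (l + 1), C i := by
    rw [sum_mul, mul_sum]
    exact sum_congr rfl fun i hi => hC i (mem_range_succ_iff.1 hi)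
  calc (∑ i ∈ range (l + 2), C i) * (1 - C (l + 1))
      = (∑ i ∈ range (l + 2), C i) - (∑ i ∈ range (l + 2), C i) * C (l + 1) := mul_one_sub _ _
    _ = (∑ i ∈ range (l + 1), C i) - (∑ i ∈ range (l + 1), C (i + 1)) * C (l + 1) := by
      nth_rw 2 [sum_range_succ']
      rw [sum_range_succ, h0]
      noncomm_ring
    _ = (1 - C 1 * C (l + 1)) * ∑ i ∈ range (l + 1), C i := by rw [shifted, one_sub_mul]

end Telescoping

section PermOperators

variable {α R : Type*} [Fintype α] [LinearOrder α]

/-- The product of `w (σ i) (σ j)` over the pairs of positions `i < j` whose letters `σ i` and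
`σ j` appear in the opposite order in `τ`. For `w = q` this is `v_n(σ, τ)`. -/
def inversionWeight [CommMonoid R] (w : α → α → R) (σ τ : Perm α) : R :=
  ∏ p : α × α with p.1 < p.2 ∧ τ⁻¹ (σ p.2) < τ⁻¹ (σ p.1), w (σ p.1) (σ p.2)

theorem inversionWeight_self [CommMonoid R] (w : α → α → R) (σ : Perm α) :
    inversionWeight w σ σ = 1 := by
  rw [inversionWeight, filter_eq_empty_iff.2, prod_empty]
  intro p _ h
  simp only [Perm.inv_def, symm_apply_apply] at h
  exact h.1.not_gt h.2

theorem inversionWeight_eq_prod_letters [CommMonoid R] (w : α → α → R) (σ τ : Perm α) :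
    inversionWeight w σ τ =
      ∏ p : α × α, if σ⁻¹ p.1 < σ⁻¹ p.2 ∧ τ⁻¹ p.2 < τ⁻¹ p.1 then w p.1 p.2 else 1 := by
  rw [inversionWeight, prod_filter]
  exact Fintype.prod_equiv (σ.prodCongr σ) _ _ fun p => by simp

theorem inversionWeight_mul_inversionWeight [CommMonoid R] (w : α → α → R) {σ τ υ : Perm α}
    (h : ∀ a b, τ⁻¹ a < τ⁻¹ b → υ⁻¹ b < υ⁻¹ a → σ⁻¹ a < σ⁻¹ b) :
    inversionWeight w σ τ * inversionWeight w τ υ = inversionWeight w σ υ := by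
  simp_rw [inversionWeight_eq_prod_letters, ← prod_mul_distrib]
  refine prod_congr rfl fun ⟨a, b⟩ _ => ?_
  rcases eq_or_ne a b with rfl | hab
  · simp
  have hτ : τ⁻¹ a < τ⁻¹ b ∨ τ⁻¹ b < τ⁻¹ a := lt_or_gt_of_ne (by simpa using hab)
  have hυ : υ⁻¹ a < υ⁻¹ b ∨ υ⁻¹ b < υ⁻¹ a := lt_or_gt_of_ne (by simpa using hab)
  have := h a b
  have := h b a
  grind

theorem map_inversionWeight [CommMonoid R] {S F : Type*} [CommMonoid S] [FunLike F R S]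
    [MonoidHomClass F R S] (φ : F) (w : α → α → R) (σ τ : Perm α) :
    φ (inversionWeight w σ τ) = inversionWeight (fun a b => φ (w a b)) σ τ :=
  map_prod φ _ _

/-- The summand of the matrix of `inversionWeight w` supported on the entries `(σ, σ * π)`: the
operator permuting positions by `π`, weighted by the pairs of letters that it inverts. -/
def permOp [CommMonoidWithZero R] (w : α → α → R) (π : Perm α) : Matrix (Perm α) (Perm α) R :=
  translationMatrix π fun σ => inversionWeight w σ (σ * π)

theorem permOp_one [CommMonoidWithZero R] (w : α → α → R) : permOp w 1 = 1 := by
  simp_rw [permOp, mul_one, inversionWeight_self, translationMatrix_one]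

theorem permOp_mul_permOp [CommSemiring R] (w : α → α → R) {π ρ : Perm α}
    (h : ∀ u v, u < v → ρ v < ρ u → π (ρ v) < π (ρ u)) :
    permOp w π * permOp w ρ = permOp w (π * ρ) := by
  rw [permOp, permOp, permOp, translationMatrix_mul]
  congr 1
  ext σ
  rw [← mul_assoc]
  refine inversionWeight_mul_inversionWeight w fun a b hab hba => ?_
  simpa using h _ _ hba (by simpa using hab)

end PermOperators

section PosCycle

variable {n k l m : ℕ}

/-- The cycle `k ↦ k + 1 ↦ ⋯ ↦ k + m ↦ k` of positions; junk value `1` if `k + m` is not a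
position. -/
def posCycle (n k m : ℕ) : Perm (Fin n) :=
  if h : k + m < n then Fin.cycleIcc ⟨k, by omega⟩ ⟨k + m, h⟩ else 1

theorem posCycle_val (h : k + m < n) (x : Fin n) :
    (posCycle n k m x : ℕ) =
      if (x : ℕ) = k + m then k else if k ≤ x ∧ (x : ℕ) < k + m then x + 1 else x := by
  have : NeZero n := ⟨by omega⟩
  rw [posCycle, dif_pos h]
  split_ifs with hlast hmid
  · obtain rfl : x = ⟨k + m, h⟩ := Fin.ext hlast
    rw [Fin.cycleIcc_of_last (by simp [Fin.le_def])]
  · rw [Fin.cycleIcc_of_ge_of_lt (Fin.le_def.2 hmid.1) (Fin.lt_def.2 hmid.2),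
      Fin.val_add_one_of_lt' (by omega)]
  · rcases lt_or_ge (x : ℕ) k with hx | hx
    · rw [Fin.cycleIcc_of_lt (Fin.lt_def.2 hx)]
    · rw [Fin.cycleIcc_of_gt (Fin.lt_def.2 (by simp only; omega))]

theorem posCycle_apply_last (h : k + m < n) : posCycle n k m ⟨k + m, h⟩ = ⟨k, by omega⟩ := by
  ext
  simp [posCycle_val h]

theorem posCycle_zero (n k : ℕ) : posCycle n k 0 = 1 := by
  by_cases h : k + 0 < n
  · have : NeZero n := ⟨by omega⟩
    rw [posCycle, dif_pos h]
    exact Fin.cycleIcc_eq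
  · rw [posCycle, dif_neg h]

theorem posCycle_succ (h : k + m + 1 < n) :
    posCycle n k (m + 1) = posCycle n k 1 * posCycle n (k + 1) m := by
  ext x
  rw [Perm.mul_apply, posCycle_val (by omega), posCycle_val (by omega), posCycle_val (by omega)]
  grind

theorem posCycle_one_mul_self (h : k + 1 < n) : posCycle n k 1 * posCycle n k 1 = 1 := by
  ext x
  rw [Perm.mul_apply, Perm.one_apply, posCycle_val h, posCycle_val h]
  grind

theorem posCycle_mul_posCycle (hlm : l < m) (h : k + m < n) :
    posCycle n (k + 1) l * posCycle n k m = posCycle n k m * posCycle n k l := by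
  ext x
  rw [Perm.mul_apply, Perm.mul_apply, posCycle_val (by omega), posCycle_val h, posCycle_val h,
    posCycle_val (by omega)]
  grind

/-- The positions `k, …, k + m`, the support of `posCycle n k m` when `0 < m`. -/
def posIcc (n k m : ℕ) : Finset (Fin n) := {x | k ≤ x ∧ (x : ℕ) ≤ k + m}

theorem mem_posIcc {x : Fin n} : x ∈ posIcc n k m ↔ k ≤ x ∧ (x : ℕ) ≤ k + m := by
  simp [posIcc]

theorem posIcc_eq_Icc (h : k + m < n) :
    posIcc n k m = Icc (⟨k, by omega⟩ : Fin n) ⟨k + m, h⟩ := by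
  ext x
  rw [mem_posIcc, mem_Icc, Fin.le_def, Fin.le_def]

theorem card_posIcc (h : k + m < n) : #(posIcc n k m) = m + 1 := by
  rw [posIcc_eq_Icc h, Fin.card_Icc]
  simp only
  omega

theorem posIcc_succ (h : k + m + 1 < n) :
    posIcc n k (m + 1) = insert ⟨k, by omega⟩ (posIcc n (k + 1) m) := by
  ext x
  simp only [mem_insert, mem_posIcc, Fin.ext_iff]
  omega

theorem posCycle_apply_of_notMem (h : k + m < n) {x : Fin n} (hx : x ∉ posIcc n k m) :
    posCycle n k m x = x := by
  ext
  rw [mem_posIcc] at hx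
  rw [posCycle_val h]
  grind

theorem posCycle_apply_of_lt (h : k + m < n) {x : Fin n} (hx : (x : ℕ) < k) :
    posCycle n k m x = x :=
  posCycle_apply_of_notMem h fun hmem => hx.not_ge (mem_posIcc.1 hmem).1

theorem isCycleOn_posCycle (h : k + m < n) : (posCycle n k m).IsCycleOn (posIcc n k m) := by
  rcases Nat.eq_zero_or_pos m with rfl | hm
  · have : (posIcc n k 0 : Set (Fin n)).Subsingleton := by
      intro x hx y hy
      rw [SetLike.mem_coe, mem_posIcc] at hx hy
      omega
    rw [posCycle_zero]
    exact this.isCycleOn_one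
  · have : (posIcc n k m : Set (Fin n)) = {x | posCycle n k m x ≠ x} := by
      ext x
      rw [SetLike.mem_coe, mem_posIcc, Set.mem_ofPred_eq, ne_eq, Fin.ext_iff, posCycle_val h]
      grind
    rw [this, posCycle, dif_pos h]
    exact (Fin.isCycle_cycleIcc (by simpa [Fin.lt_def] using hm)).isCycleOn

theorem orderOf_posCycle (h : k + m < n) : orderOf (posCycle n k m) = m + 1 := by
  rw [← card_posIcc h]
  exact orderOf_eq_card_of_isCycleOn (isCycleOn_posCycle h)
    (card_pos.1 (by simp [card_posIcc h])) fun x => posCycle_apply_of_notMem h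

theorem image_posCycle (h : k + m < n) : (posIcc n k m).image (posCycle n k m) = posIcc n k m :=
  coe_injective (by simpa using (isCycleOn_posCycle h).1.image_eq)

end PosCycle

section CycleOperators

variable {n k l m : ℕ} {R : Type*}

theorem permOp_mul_posCycle [CommSemiring R] (w : Fin n → Fin n → R) (h : k + m < n)
    {π : Perm (Fin n)} (hπ : ∀ y : Fin n, k < y → (y : ℕ) ≤ k + m → π ⟨k, by omega⟩ < π y) :
    permOp w π * permOp w (posCycle n k m) = permOp w (π * posCycle n k m) := by
  refine permOp_mul_permOp w fun u v huv hvu => ?_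
  rw [Fin.lt_def] at huv hvu
  have hu := posCycle_val h u
  have hv := posCycle_val h v
  have posCycle_v : posCycle n k m v = ⟨k, by omega⟩ := by
    ext
    grind
  rw [posCycle_v]
  exact hπ _ (by grind) (by grind)

theorem inversionWeight_mul_posCycle [CommMonoid R] (w : Fin n → Fin n → R) (h : k + m < n)
    (σ : Perm (Fin n)) :
    inversionWeight w σ (σ * posCycle n k m) =
      ∏ b ∈ ((posIcc n k m).image σ).erase (σ ⟨k, by omega⟩), w (σ ⟨k, by omega⟩) b := by
  have inverted_iff (x y : Fin n) : (x < y ∧ (posCycle n k m)⁻¹ y < (posCycle n k m)⁻¹ x) ↔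
      x = ⟨k, by omega⟩ ∧ y ∈ (posIcc n k m).erase ⟨k, by omega⟩ := by
    obtain ⟨u, rfl⟩ := (posCycle n k m).surjective x
    obtain ⟨v, rfl⟩ := (posCycle n k m).surjective y
    simp only [Perm.inv_def, symm_apply_apply, mem_erase, mem_posIcc, Fin.lt_def, Fin.ext_iff,
      ne_eq]
    have hu := posCycle_val h u
    have hv := posCycle_val h v
    grind
  have inversions_eq : ({p | p.1 < p.2 ∧ (σ * posCycle n k m)⁻¹ (σ p.2) <
      (σ * posCycle n k m)⁻¹ (σ p.1)} : Finset (Fin n × Fin n)) =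
      {⟨k, by omega⟩} ×ˢ (posIcc n k m).erase ⟨k, by omega⟩ := by
    ext p
    rw [mem_filter_univ, mem_product, mem_singleton, ← inverted_iff]
    simp only [mul_inv_rev, Perm.mul_apply, Perm.inv_def σ, symm_apply_apply]
  rw [← image_erase σ.injective, prod_image σ.injective.injOn, inversionWeight, inversions_eq,
    prod_product, prod_singleton]

theorem permOp_posCycle_succ [CommSemiring R] (w : Fin n → Fin n → R) (h : k + m + 1 < n) :
    permOp w (posCycle n k (m + 1)) =
      permOp w (posCycle n k 1) * permOp w (posCycle n (k + 1) m) := by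
  rw [posCycle_succ (by omega), permOp_mul_posCycle w (by omega)]
  intro y hy _
  rw [Fin.lt_def, posCycle_val (by omega), posCycle_val (by omega)]
  grind

theorem permOp_posCycle_exchange [CommSemiring R] (w : Fin n → Fin n → R) (hlm : l < m)
    (h : k + m < n) :
    permOp w (posCycle n k (l + 1)) * permOp w (posCycle n k m) =
      permOp w (posCycle n k 1) * permOp w (posCycle n k m) * permOp w (posCycle n k l) := by
  have swap : permOp w (posCycle n (k + 1) l) * permOp w (posCycle n k m) =
      permOp w (posCycle n k m) * permOp w (posCycle n k l) := by
    rw [permOp_mul_posCycle w h, permOp_mul_posCycle w (by omega), posCycle_mul_posCycle hlm h]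
    all_goals
      intro y hy hyl
      rw [Fin.lt_def, posCycle_val (by omega), posCycle_val (by omega)]
      grind
  rw [permOp_posCycle_succ w (by omega), mul_assoc, swap, mul_assoc]

theorem permOp_posCycle_one [CommSemiring R] (w : Fin n → Fin n → R) (h : k + 1 < n) :
    permOp w (posCycle n k 1) =
      translationMatrix (posCycle n k 1) fun σ => w (σ ⟨k, by omega⟩) (σ ⟨k + 1, h⟩) := by
  have : (posIcc n k 1).erase ⟨k, by omega⟩ = {⟨k + 1, h⟩} := by
    ext x
    simp only [mem_erase, mem_posIcc, mem_singleton, Fin.ext_iff, ne_eq]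
    omega
  simp_rw [permOp, inversionWeight_mul_posCycle w h, ← image_erase (Equiv.injective _), this,
    image_singleton, prod_singleton]

theorem permOp_posCycle_one_mul_self [CommSemiring R] (w : Fin n → Fin n → R) (h : k + 1 < n) :
    permOp w (posCycle n k 1) * permOp w (posCycle n k 1) =
      translationMatrix 1 fun σ => w (σ ⟨k, by omega⟩) (σ ⟨k + 1, h⟩) *
        w (σ ⟨k + 1, h⟩) (σ ⟨k, by omega⟩) := by
  have apply_fst : posCycle n k 1 ⟨k, by omega⟩ = ⟨k + 1, h⟩ := by
    ext
    simp [posCycle_val h]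
  have apply_snd : posCycle n k 1 ⟨k + 1, h⟩ = ⟨k, by omega⟩ := by
    ext
    simp [posCycle_val h]
  simp only [permOp_posCycle_one w h, translationMatrix_mul, posCycle_one_mul_self h,
    Perm.mul_apply, apply_fst, apply_snd]

theorem permOp_posCycle_one_mul [CommSemiring R] (w : Fin n → Fin n → R) (h : k + m + 1 < n) :
    permOp w (posCycle n k 1) * permOp w (posCycle n k (m + 1)) =
      translationMatrix (posCycle n (k + 1) m) fun σ =>
        w (σ ⟨k, by omega⟩) (σ ⟨k + 1, by omega⟩) * w (σ ⟨k + 1, by omega⟩) (σ ⟨k, by omega⟩) *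
          inversionWeight w σ (σ * posCycle n (k + 1) m) := by
  rw [permOp_posCycle_succ w h, ← mul_assoc, permOp_posCycle_one_mul_self w (by omega), permOp,
    translationMatrix_mul]
  simp only [one_mul, mul_one]

end CycleOperators

section Determinants

variable {n k l m : ℕ} {R : Type*} [CommRing R] (w : Fin n → Fin n → R)

theorem image_mul_posCycle_pow (h : k + m < n) (σ : Perm (Fin n)) (i : ℕ) :
    (posIcc n k m).image (σ * posCycle n k m ^ i) = (posIcc n k m).image σ :=
  apply_mul_pow_of_invariant (J := fun τ : Perm (Fin n) => (posIcc n k m).image τ)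
    (fun τ => by rw [Perm.coe_mul, ← image_image, image_posCycle h]) σ i

theorem prod_orbit_inversionWeight (h : k + m < n) (F : Fin n → R) (σ : Perm (Fin n)) :
    ∏ i ∈ range (m + 1), (F ((σ * posCycle n k m ^ i) ⟨k, by omega⟩) *
        inversionWeight w (σ * posCycle n k m ^ i) (σ * posCycle n k m ^ i * posCycle n k m)) =
      ∏ a ∈ (posIcc n k m).image σ, (F a * ∏ b ∈ ((posIcc n k m).image σ).erase a, w a b) := by
  simp_rw [inversionWeight_mul_posCycle w h, image_mul_posCycle_pow h]
  rw [prod_image σ.injective.injOn, ← prod_range_pow_apply_of_isCycleOn (isCycleOn_posCycle h)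
    (a := ⟨k, by omega⟩) (by simp [mem_posIcc]), card_posIcc h]
  rfl

theorem det_one_sub_permOp_posCycle (h : k + m < n) :
    (1 - permOp w (posCycle n k m)).det = ∏ I ∈ powersetCard (m + 1) univ,
      (1 - pairWeight w I) ^ (m.factorial * (n - (m + 1)).factorial) := by
  rw [← card_posIcc h]
  refine det_one_sub_translationMatrix_of_image (image_posCycle h) (H := pairWeight w) ?_ ?_
  · intro σ
    rw [orderOf_posCycle h]
    simpa only [Pi.one_apply, one_mul, pairWeight] using prod_orbit_inversionWeight w h 1 σ
  · rw [card_posIcc h, orderOf_posCycle h, Fintype.card_fin, Nat.factorial_succ, mul_assoc]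

theorem det_one_sub_permOp_posCycle_one_mul (h : k + m + 1 < n) :
    (1 - permOp w (posCycle n k 1) * permOp w (posCycle n k (m + 1))).det =
      ∏ I ∈ powersetCard (m + 2) univ,
        (1 - pairWeight w I) ^ ((m + 2) * m.factorial * (n - (m + 2)).factorial) := by
  have h' : k + 1 + m < n := by omega
  have notMem : (⟨k, by omega⟩ : Fin n) ∉ posIcc n (k + 1) m := by simp [mem_posIcc]
  have card_eq : #(posIcc n k (m + 1)) = m + 2 := card_posIcc h
  rw [permOp_posCycle_one_mul w h, ← card_eq]
  refine det_one_sub_translationMatrix_of_image ?_ (H := pairWeight w) ?_ ?_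
  · rw [posIcc_succ h, image_insert, image_posCycle h', posCycle_apply_of_notMem h' notMem]
  · intro σ
    have pow_apply (i : ℕ) : (posCycle n (k + 1) m ^ i) ⟨k, by omega⟩ = ⟨k, by omega⟩ :=
      Function.IsFixedPt.perm_pow (posCycle_apply_of_notMem h' notMem) i
    rw [orderOf_posCycle h', posIcc_succ h, image_insert,
      pairWeight_insert w (by simpa using notMem),
      ← prod_orbit_inversionWeight w h' fun a => w (σ ⟨k, by omega⟩) a * w a (σ ⟨k, by omega⟩)]
    simp only [Perm.mul_apply, pow_apply]
  · rw [card_eq, orderOf_posCycle h', Fintype.card_fin, Nat.factorial_succ, Nat.factorial_succ]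
    ring

theorem prod_two_le_card_le_succ {α M : Type*} [Fintype α] [CommMonoid M]
    (F : Finset α → M) (l : ℕ) :
    ∏ I with 2 ≤ #I ∧ #I ≤ l + 2, F I =
      (∏ I ∈ powersetCard (l + 2) univ, F I) * ∏ I with 2 ≤ #I ∧ #I ≤ l + 1, F I := by
  classical
  rw [← prod_union]
  · congr 1
    ext I
    simp only [mem_filter_univ, mem_union, mem_powersetCard, subset_univ, true_and]
    omega
  · rw [disjoint_left]
    intro I hI
    rw [mem_filter_univ, (mem_powersetCard.1 hI).2]
    omega

theorem det_sum_permOp_posCycle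
    (hw : ∀ I : Finset (Fin n), 2 ≤ #I → 1 - pairWeight w I ∈ nonZeroDivisors R)
    (h : k + l < n) :
    (∑ i ∈ range (l + 1), permOp w (posCycle n k i)).det =
      ∏ I with 2 ≤ #I ∧ #I ≤ l + 1,
        (1 - pairWeight w I) ^ ((#I - 2).factorial * (n - #I).factorial) := by
  induction l with
  | zero =>
    rw [filter_false_of_mem fun I _ => by omega, prod_empty]
    simp [posCycle_zero, permOp_one]
  | succ l ih =>
    have key := congrArg Matrix.det <| sum_range_mul_one_sub (A := Matrix _ _ R)
      (C := fun i => permOp w (posCycle n k i)) (l := l) (by simp only [posCycle_zero, permOp_one])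
      fun i hi => permOp_posCycle_exchange w (Nat.lt_succ_of_le hi) h
    rw [Matrix.det_mul, Matrix.det_mul, ih (by omega), det_one_sub_permOp_posCycle w h,
      det_one_sub_permOp_posCycle_one_mul w h] at key
    have cancel : ∏ I ∈ powersetCard (l + 2) univ,
        (1 - pairWeight w I) ^ ((l + 1).factorial * (n - (l + 2)).factorial) ∈
          nonZeroDivisors R :=
      prod_mem fun I hI => pow_mem (hw I (by grind)) _
    rw [← mul_cancel_right_mem_nonZeroDivisors cancel, key]
    rw [prod_two_le_card_le_succ, mul_right_comm (∏ I ∈ powersetCard (l + 2) univ, _),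
      ← prod_mul_distrib]
    congr 1
    refine prod_congr rfl fun I hI => ?_
    rw [(mem_powersetCard.1 hI).2, Nat.add_sub_cancel, ← pow_add, Nat.factorial_succ]
    ring

end Determinants

section Factorization

variable {n k l m : ℕ} {R : Type*} [CommSemiring R] (w : Fin n → Fin n → R)

/-- The permutations of the positions that fix every position below `k`. -/
def permsFixingBelow (n k : ℕ) : Finset (Perm (Fin n)) := {π | ∀ x : Fin n, (x : ℕ) < k → π x = x}

theorem mem_permsFixingBelow {π : Perm (Fin n)} :
    π ∈ permsFixingBelow n k ↔ ∀ x : Fin n, (x : ℕ) < k → π x = x := by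
  simp [permsFixingBelow]

theorem mul_posCycle_apply_last (h : k + m < n) {π : Perm (Fin n)}
    (hπ : π ∈ permsFixingBelow n (k + 1)) : (π * posCycle n k m) ⟨k + m, h⟩ = ⟨k, by omega⟩ := by
  rw [Perm.mul_apply, posCycle_apply_last, mem_permsFixingBelow.1 hπ _ (Nat.lt_succ_self k)]

theorem mul_posCycle_mem_permsFixingBelow (h : k + m < n) {π : Perm (Fin n)}
    (hπ : π ∈ permsFixingBelow n (k + 1)) : π * posCycle n k m ∈ permsFixingBelow n k := by
  rw [mem_permsFixingBelow] at hπ ⊢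
  intro x hx
  rw [Perm.mul_apply, posCycle_apply_of_lt h hx, hπ x (by omega)]

theorem exists_mul_posCycle_eq (hk : k < n) {ρ : Perm (Fin n)} (hρ : ρ ∈ permsFixingBelow n k) :
    ∃ π ∈ permsFixingBelow n (k + 1), ∃ m, k + m < n ∧ π * posCycle n k m = ρ := by
  rw [mem_permsFixingBelow] at hρ
  obtain ⟨y, hy⟩ := ρ.surjective ⟨k, hk⟩
  have hky : k ≤ y := by
    by_contra! hlt
    have : (ρ y : ℕ) = y := by rw [hρ y hlt]
    rw [hy] at this
    exact hlt.ne' this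
  obtain ⟨m, hm⟩ := Nat.exists_eq_add_of_le hky
  have hlt : k + m < n := hm ▸ y.2
  refine ⟨ρ * (posCycle n k m)⁻¹, mem_permsFixingBelow.2 fun x hx => ?_, m, hlt,
    inv_mul_cancel_right _ _⟩
  rw [Perm.mul_apply]
  rcases Nat.lt_succ_iff_lt_or_eq.1 hx with hx | hx
  · rw [Perm.inv_eq_iff_eq.2 (posCycle_apply_of_lt hlt hx).symm, hρ x hx]
  · obtain rfl : x = ⟨k, hk⟩ := Fin.ext hx
    rw [Perm.inv_eq_iff_eq.2 (posCycle_apply_last hlt).symm, ← hy]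
    congr 1
    exact Fin.ext hm.symm

theorem sum_permsFixingBelow {M : Type*} [AddCommMonoid M] (h : k + l + 1 = n)
    (F : Perm (Fin n) → M) :
    ∑ π ∈ permsFixingBelow n (k + 1), ∑ i ∈ range (l + 1), F (π * posCycle n k i) =
      ∑ ρ ∈ permsFixingBelow n k, F ρ := by
  rw [← sum_product']
  refine sum_bij (fun p _ => p.1 * posCycle n k p.2) ?_ ?_ ?_ fun _ _ => rfl
  · rintro ⟨π, i⟩ hp
    obtain ⟨hπ, hi⟩ := mem_product.1 hp
    rw [mem_range] at hi
    exact mul_posCycle_mem_permsFixingBelow (by omega) hπ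
  · rintro ⟨π, i⟩ hp ⟨ρ, j⟩ hq heq
    obtain ⟨⟨hπ, hi⟩, hρ, hj⟩ := And.intro (mem_product.1 hp) (mem_product.1 hq)
    simp only [mem_range] at hi hj heq
    have last_i := mul_posCycle_apply_last (m := i) (by omega) hπ
    rw [heq, ← mul_posCycle_apply_last (m := j) (by omega) hρ] at last_i
    obtain rfl : i = j := by simpa using (ρ * posCycle n k j).injective last_i
    rw [mul_right_cancel heq]
  · intro ρ hρ
    obtain ⟨π, hπ, m, hm, rfl⟩ := exists_mul_posCycle_eq (by omega) hρ
    exact ⟨(π, m), mem_product.2 ⟨hπ, mem_range.2 (by omega)⟩, rfl⟩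

theorem sum_univ_permOp : ∑ π, permOp w π = Matrix.of (inversionWeight w) := by
  ext σ τ
  simp only [Matrix.sum_apply, permOp, translationMatrix_apply, Matrix.of_apply]
  rw [sum_eq_single (σ⁻¹ * τ)]
  · simp
  · rintro π - hπ
    rw [if_neg]
    rintro rfl
    simp at hπ
  · simp

theorem permsFixingBelow_zero (n : ℕ) : permsFixingBelow n 0 = univ := by
  ext π
  simp [mem_permsFixingBelow]

theorem permsFixingBelow_self (n : ℕ) : permsFixingBelow n n = {1} := by
  ext π
  simp [mem_permsFixingBelow, Perm.ext_iff]

theorem sum_permsFixingBelow_permOp (h : k + l + 1 = n) :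
    ∑ π ∈ permsFixingBelow n k, permOp w π =
      (∑ π ∈ permsFixingBelow n (k + 1), permOp w π) *
        ∑ i ∈ range (l + 1), permOp w (posCycle n k i) := by
  rw [← sum_permsFixingBelow h, sum_mul_sum]
  refine sum_congr rfl fun π hπ => sum_congr rfl fun i hi => (permOp_mul_posCycle w ?_ ?_).symm
  · rw [mem_range] at hi
    omega
  intro y hy _
  rw [mem_permsFixingBelow] at hπ
  rw [hπ _ (Nat.lt_succ_self k)]
  by_contra! hle
  rw [π.injective (hπ (π y) (Nat.lt_succ_of_le hle)), Fin.le_def] at hle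
  exact hle.not_gt hy

end Factorization

section Main

variable {n : ℕ} {R : Type*} [CommRing R] {w : Fin n → Fin n → R}

theorem det_sum_permsFixingBelow
    (hw : ∀ I : Finset (Fin n), 2 ≤ #I → 1 - pairWeight w I ∈ nonZeroDivisors R) {k d : ℕ}
    (h : k + d = n) :
    (∑ π ∈ permsFixingBelow n k, permOp w π).det =
      ∏ l ∈ range d, ∏ I with 2 ≤ #I ∧ #I ≤ l + 1,
        (1 - pairWeight w I) ^ ((#I - 2).factorial * (n - #I).factorial) := by
  induction d generalizing k with
  | zero =>
    obtain rfl : k = n := h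
    rw [permsFixingBelow_self, sum_singleton, permOp_one, Matrix.det_one, range_zero, prod_empty]
  | succ d ih =>
    rw [sum_permsFixingBelow_permOp w (by omega), Matrix.det_mul, ih (by omega),
      det_sum_permOp_posCycle w hw (by omega), prod_range_succ]

theorem prod_range_prod_card_le {α M : Type*} [Fintype α] [CommMonoid M]
    (F : Finset α → M) (n : ℕ) :
    ∏ l ∈ range n, ∏ I with 2 ≤ #I ∧ #I ≤ l + 1, F I =
      ∏ I with 2 ≤ #I, F I ^ (n + 1 - #I) := by
  rw [prod_comm' (t' := {I : Finset α | 2 ≤ #I}) (s' := fun I => Ico (#I - 1) n)]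
  · refine prod_congr rfl fun I hI => ?_
    rw [prod_const, Nat.card_Ico]
    congr 1
    grind
  · intro l I
    simp only [mem_range, mem_filter_univ, mem_Ico]
    omega

theorem det_inversionWeight_of_mem_nonZeroDivisors
    (hw : ∀ I : Finset (Fin n), 2 ≤ #I → 1 - pairWeight w I ∈ nonZeroDivisors R) :
    (Matrix.of (inversionWeight w)).det =
      ∏ I with 2 ≤ #I, (1 - pairWeight w I) ^ ((#I - 2).factorial * (n - #I + 1).factorial) := by
  rw [← sum_univ_permOp, ← permsFixingBelow_zero, det_sum_permsFixingBelow hw (zero_add n),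
    prod_range_prod_card_le]
  refine prod_congr rfl fun I _ => ?_
  have : #I ≤ n := by simpa using card_le_univ I
  rw [← pow_mul, Nat.sub_add_comm this, Nat.factorial_succ]
  ring

theorem one_sub_pairWeight_X_ne_zero {I : Finset (Fin n)} (hI : 2 ≤ #I) :
    1 - pairWeight (fun a b => (MvPolynomial.X (a, b) : MvPolynomial (Fin n × Fin n) ℤ)) I ≠ 0 := by
  obtain ⟨a, ha, b, hb, hab⟩ := one_lt_card.1 hI
  intro h
  have eval_zero := congrArg (MvPolynomial.eval (0 : Fin n × Fin n → ℤ)) h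
  have pairWeight_zero : pairWeight (fun _ _ : Fin n => (0 : ℤ)) I = 0 :=
    prod_eq_zero ha (prod_eq_zero (mem_erase.2 ⟨hab.symm, hb⟩) rfl)
  simp [map_pairWeight, pairWeight_zero] at eval_zero

theorem det_vn_matrix_general (w : Fin n → Fin n → R) :
    Matrix.det (Matrix.of fun σ τ : Perm (Fin n) => inversionWeight w σ τ) =
      ∏ I ∈ Finset.univ.powerset.filter (fun I : Finset (Fin n) => 2 ≤ I.card),
        (1 - ∏ p ∈ (I ×ˢ I).filter (fun p : Fin n × Fin n => p.1 < p.2),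
              w p.1 p.2 * w p.2 p.1)
          ^ ((I.card - 2).factorial * (n - I.card + 1).factorial) := by
  let φ : MvPolynomial (Fin n × Fin n) ℤ →+* R :=
    (MvPolynomial.aeval fun p => w p.1 p.2).toRingHom
  have φ_X (a b : Fin n) : φ (.X (a, b)) = w a b := MvPolynomial.aeval_X _ _
  have generic := congrArg φ <| det_inversionWeight_of_mem_nonZeroDivisors
    fun I hI => mem_nonZeroDivisors_of_ne_zero (one_sub_pairWeight_X_ne_zero (n := n) hI)
  simp only [RingHom.map_det, map_prod, map_pow, map_sub, map_one, map_pairWeight, φ_X] at generic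
  simp only [powerset_univ, ← pairWeight_eq_prod_lt]
  rw [← generic]
  congr 1
  ext σ τ
  simp [map_inversionWeight, φ_X]

end Main

theorem det_vn_matrix (n : ℕ) (hn : 2 ≤ n) :
    Matrix.det (Matrix.of fun σ τ : Equiv.Perm (Fin n) => vn σ τ) =
      ∏ I ∈ Finset.univ.powerset.filter (fun I : Finset (Fin n) => 2 ≤ I.card),
        (1 - ∏ p ∈ (I ×ˢ I).filter (fun p : Fin n × Fin n => p.1 < p.2),
              q p.1 p.2 * q p.2 p.1)
          ^ ((I.card - 2).factorial * (n - I.card + 1).factorial) :=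
  det_vn_matrix_general q
end

section
/- Let n ≥ 2 be an integer and q a single polynomial indeterminate over ℤ. Let M be the n!×n! matrix, indexed by permutations σ, τ of {1,…,n}, whose (σ,τ) entry is q^{ι(σ,τ)}, where ι(σ,τ) = #{(i,j) : 1 ≤ i < j ≤ n and τ⁻¹(σ(i)) > τ⁻¹(σ(j))}. Then det M = ∏_{k=2}^{n} (1 − q^{k(k−1)})^{\binom{n}{k}·(k−2)!·(n−k+1)!} in ℤ[q]. -/
/-- The number of inversions `ι(σ,τ) = #{(i,j) : i < j and τ⁻¹(σ(i)) > τ⁻¹(σ(j))}`. -/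
def inv_count {n : ℕ} (σ τ : Equiv.Perm (Fin n)) : ℕ :=
  (Finset.univ.filter
      (fun p : Fin n × Fin n => p.1 < p.2 ∧ τ⁻¹ (σ p.2) < τ⁻¹ (σ p.1))).card

/-!
The matrix represents right multiplication by `∑_g q ^ inv(g) g` on the group algebra of `S_n`, so
its determinant is the norm of that element. Following Zagier, write each element of `S_{n+1}`
uniquely as `c_k w`, where `c_k` is the cycle `0 ↦ k ↦ k - 1 ↦ ⋯ ↦ 0` and `w` fixes `0`; since
inversions add up, the element for `S_{n+1}` is `∑_{k ≤ n} q ^ k c_k` times the one for `S_n`. The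
first factor telescopes: `T_p = ∑_{k ≤ p} q ^ k c_k` satisfies
`(1 - q ^ p c_p) T_p = T_{p-1} (1 - q ^ (p+1) c_p c_1)`, because `c_p c_{k+1} = c_k c_p c_1`
for `k < p`. All remaining norms are instances of `N(1 - y g) = (1 - y ^ d) ^ (|G| / d)` with `d`
the order of `g`. Cancelling `N(1 - q ^ p c_p)` is legitimate when `q` is an indeterminate, and any
other `q` is a specialization of it.
-/

section Cycles

/-- The embedding `S_n → S_{n+1}` onto the stabilizer of `0`, through which the sum over `S_{n+1}`
is reduced to the one over `S_n`. -/
noncomputable def permSuccHom (n : ℕ) : Equiv.Perm (Fin n) →* Equiv.Perm (Fin (n + 1)) :=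
  Equiv.Perm.viaEmbeddingHom (Fin.succEmb n)

@[simp]
theorem permSuccHom_apply_zero {n : ℕ} (w : Equiv.Perm (Fin n)) : permSuccHom n w 0 = 0 :=
  w.viaEmbedding_apply_of_notMem _ _ (by simp)

@[simp]
theorem permSuccHom_apply_succ {n : ℕ} (w : Equiv.Perm (Fin n)) (i : Fin n) :
    permSuccHom n w i.succ = (w i).succ :=
  w.viaEmbedding_apply (Fin.succEmb n) i

theorem permSuccHom_injective (n : ℕ) : Function.Injective (permSuccHom n) :=
  Equiv.Perm.viaEmbeddingHom_injective _

theorem index_range_permSuccHom (n : ℕ) : (permSuccHom n).range.index = n + 1 := by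
  have h := (permSuccHom n).range.card_mul_index
  rw [← Nat.card_congr ((permSuccHom n).ofInjective (permSuccHom_injective n)).toEquiv,
    Nat.card_perm, Nat.card_perm, Nat.card_fin, Nat.card_fin, Nat.factorial_succ, mul_comm] at h
  exact Nat.eq_of_mul_eq_mul_right n.factorial_pos h

/-- The cycle `0 ↦ p ↦ p - 1 ↦ ⋯ ↦ 1 ↦ 0` of `S_{n+1}`, which has `p` inversions. The parameter
`p` is a natural number, read modulo `n + 1`. -/
def lowerCycle (n p : ℕ) : Equiv.Perm (Fin (n + 1)) :=
  (Fin.ofNat (n + 1) p).cycleRange⁻¹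

theorem lowerCycle_zero (n : ℕ) : lowerCycle n 0 = 1 := by
  simp [lowerCycle]

theorem lowerCycle_val_apply_zero {n : ℕ} (p : Fin (n + 1)) : lowerCycle n p 0 = p := by
  simp [lowerCycle]

theorem lowerCycle_val_apply_succ {n : ℕ} (p : Fin (n + 1)) (i : Fin n) :
    lowerCycle n p i.succ = p.succAbove i := by
  simp [lowerCycle]

theorem val_lowerCycle_apply {n p : ℕ} (hp : p ≤ n) (i : Fin (n + 1)) :
    (lowerCycle n p i : ℕ) = if (i : ℕ) = 0 then p else if (i : ℕ) ≤ p then i - 1 else i := by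
  lift p to Fin (n + 1) using by omega
  cases i using Fin.cases with
  | zero => simp [lowerCycle_val_apply_zero]
  | succ i =>
    rw [lowerCycle_val_apply_succ, Fin.succAbove]
    grind

theorem orderOf_lowerCycle {n p : ℕ} (hp : p ≤ n) : orderOf (lowerCycle n p) = p + 1 := by
  lift p to Fin (n + 1) using by omega
  rw [lowerCycle, orderOf_inv, Fin.ofNat_eq_cast, Fin.cast_val_eq_self]
  obtain rfl | h := eq_or_ne p 0
  · simp
  · simp [← Equiv.Perm.lcm_cycleType, Fin.cycleType_cycleRange h]

theorem lowerCycle_mul_lowerCycle_succ {n p k : ℕ} (hk : k < p) (hp : p ≤ n) :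
    lowerCycle n p * lowerCycle n (k + 1) = lowerCycle n k * (lowerCycle n p * lowerCycle n 1) := by
  ext i
  simp only [Equiv.Perm.mul_apply, val_lowerCycle_apply hp,
    val_lowerCycle_apply (show k + 1 ≤ n by omega), val_lowerCycle_apply (show k ≤ n by omega),
    val_lowerCycle_apply (show 1 ≤ n by omega)]
  split_ifs <;> omega

theorem lowerCycle_succ_mul_lowerCycle_one {n p : ℕ} (hp : p ≤ n) :
    lowerCycle (n + 1) (p + 1) * lowerCycle (n + 1) 1 = permSuccHom (n + 1) (lowerCycle n p) := by
  ext i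
  rw [Equiv.Perm.mul_apply, val_lowerCycle_apply (by omega),
    val_lowerCycle_apply (show 1 ≤ n + 1 by omega)]
  cases i using Fin.cases with
  | zero => simp
  | succ i =>
    rw [permSuccHom_apply_succ, Fin.val_succ, Fin.val_succ, val_lowerCycle_apply hp]
    grind

theorem orderOf_lowerCycle_succ_mul_lowerCycle_one {n p : ℕ} (hp : p < n) :
    orderOf (lowerCycle n (p + 1) * lowerCycle n 1) = p + 1 := by
  obtain ⟨n, rfl⟩ := Nat.exists_eq_add_one_of_ne_zero hp.ne_bot
  rw [lowerCycle_succ_mul_lowerCycle_one (by omega),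
    orderOf_injective _ (permSuccHom_injective _), orderOf_lowerCycle (by omega)]

theorem lowerCycle_mul_permSuccHom_bijective (n : ℕ) :
    Function.Bijective fun x : Fin (n + 1) × Equiv.Perm (Fin n) =>
      lowerCycle n x.1 * permSuccHom n x.2 := by
  rw [Fintype.bijective_iff_injective_and_card]
  constructor
  · rintro ⟨p, v⟩ ⟨p', w⟩ h
    obtain rfl : p = p' := by
      simpa [lowerCycle_val_apply_zero] using congrArg (fun g => g 0) h
    simpa [(permSuccHom_injective n).eq_iff] using h
  · simp [Fintype.card_perm, Nat.factorial_succ]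

end Cycles

section Inversions

theorem inv_count_eq_inv_count_one {n : ℕ} (σ τ : Equiv.Perm (Fin n)) :
    inv_count σ τ = inv_count (τ⁻¹ * σ) 1 := by
  simp [inv_count]

theorem inv_count_one_eq_sum {n : ℕ} (g : Equiv.Perm (Fin n)) :
    inv_count g 1 = ∑ i, ∑ j, if i < j ∧ g j < g i then 1 else 0 := by
  rw [inv_count, Finset.card_filter, Fintype.sum_prod_type]
  simp only [inv_one, Equiv.Perm.one_apply]

theorem card_filter_succAbove_lt {n : ℕ} (p : Fin (n + 1)) :
    (Finset.univ.filter fun i => p.succAbove i < p).card = p := by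
  simp only [Fin.succAbove_lt_iff_castSucc_lt]
  simp only [Fin.lt_def, Fin.val_castSucc, Fin.card_filter_val_lt]
  exact min_eq_right p.is_le

theorem inv_count_lowerCycle_mul_permSuccHom {n : ℕ} (p : Fin (n + 1)) (w : Equiv.Perm (Fin n)) :
    inv_count (lowerCycle n p * permSuccHom n w) 1 = p + inv_count w 1 := by
  have hp : (Finset.univ.filter fun j => p.succAbove (w j) < p).card = p := by
    rw [← card_filter_succAbove_lt p, Finset.card_filter, Finset.card_filter,
      Equiv.sum_comp w fun j => if p.succAbove j < p then 1 else 0]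
  simp [inv_count_one_eq_sum, Fin.sum_univ_succ, lowerCycle_val_apply_zero,
    lowerCycle_val_apply_succ, hp]

end Inversions

section Exponents

open Nat

theorem div_eq_div_succ_add_div_mul {N m : ℕ} (hm : 0 < m) (h : m * (m + 1) ∣ N) :
    N / m = N / (m + 1) + N / ((m + 1) * m) := by
  obtain ⟨c, rfl⟩ := h
  have h1 : m * (m + 1) * c / m = (m + 1) * c := by
    rw [mul_assoc, Nat.mul_div_cancel_left _ hm]
  have h2 : m * (m + 1) * c / (m + 1) = m * c := by
    rw [mul_comm m, mul_assoc, Nat.mul_div_cancel_left _ m.succ_pos]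
  have h3 : m * (m + 1) * c / ((m + 1) * m) = c := by
    rw [mul_comm m, Nat.mul_div_cancel_left _ (by positivity)]
  rw [h1, h2, h3]
  ring

theorem choose_mul_factorial_sub_two_mul_factorial {n k : ℕ} (hk : 2 ≤ k) (hkn : k ≤ n) :
    n.choose k * (k - 2)! * (n - k)! = n ! / (k * (k - 1)) := by
  obtain ⟨k, rfl⟩ := Nat.exists_eq_add_of_le' hk
  rw [← Nat.choose_mul_factorial_mul_factorial hkn]
  refine (Nat.div_eq_of_eq_mul_right (by simp) ?_).symm
  simp only [Nat.factorial_succ, Nat.add_sub_cancel, Nat.reduceSubDiff]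
  ring

theorem choose_succ_mul_factorial_mul_factorial {n k : ℕ} (hk : 2 ≤ k) (hkn : k ≤ n + 1) :
    (n + 1).choose k * (k - 2)! * (n + 1 - k + 1)! =
      (n + 1)! / (k * (k - 1)) + n.choose k * (k - 2)! * (n - k + 1)! * (n + 1) := by
  rw [← choose_mul_factorial_sub_two_mul_factorial hk hkn, Nat.factorial_succ (n + 1 - k)]
  have h := n.choose_mul_succ_eq k
  obtain rfl | hkn := hkn.eq_or_lt
  · simp
  · rw [show n - k + 1 = n + 1 - k by omega]
    linear_combination ((k - 2)! * (n + 1 - k)!) * h.symm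

end Exponents

section GroupAlgebra

variable {R G H : Type*} [CommRing R] [Group G] [Group H]

theorem norm_monoidAlgebra_eq_det [Fintype G] [DecidableEq G] (a : MonoidAlgebra R G) :
    Algebra.norm R a = (Matrix.of fun σ τ : G => a.coeff (τ⁻¹ * σ)).det := by
  -- Reindexing by `g ↦ g⁻¹` exchanges left and right multiplication.
  rw [Algebra.norm_eq_matrix_det (MonoidAlgebra.basis G R), ← Matrix.det_transpose,
    ← Matrix.det_submatrix_equiv_self (Equiv.inv G)]
  congr 1
  ext σ τ
  simp [Algebra.leftMulMatrix_eq_repr_mul, MonoidAlgebra.basis]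

theorem norm_mapRingHom [Finite G] {S : Type*} [CommRing S] (f : R →+* S)
    (a : MonoidAlgebra R G) :
    Algebra.norm S (MonoidAlgebra.mapRingHom G f a) = f (Algebra.norm R a) := by
  classical
  have := Fintype.ofFinite G
  rw [norm_monoidAlgebra_eq_det, norm_monoidAlgebra_eq_det, f.map_det]
  congr 1

theorem norm_mapDomainRingHom_of_injective [Finite G] {φ : H →* G} (hφ : Function.Injective φ)
    (a : MonoidAlgebra R H) :
    Algebra.norm R (MonoidAlgebra.mapDomainRingHom R φ a) = Algebra.norm R a ^ φ.range.index := by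
  classical
  have := Fintype.ofFinite G
  have := Fintype.ofInjective φ hφ
  obtain ⟨T, hT, -⟩ := φ.range.exists_isComplement_left 1
  let e : H × T ≃ G :=
    ((Equiv.prodComm H T).trans
      ((Equiv.refl T).prodCongr (MonoidHom.ofInjective hφ).toEquiv)).trans (Equiv.ofBijective _ hT)
  have he (h : H) (t : T) : e (h, t) = t * φ h := rfl
  rw [norm_monoidAlgebra_eq_det, norm_monoidAlgebra_eq_det,
    ← Matrix.det_submatrix_equiv_self e, ← hT.card_left, Nat.card_eq_fintype_card,
    ← Finset.card_univ, ← Finset.prod_const, ← Matrix.det_blockDiagonal]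
  congr 1
  ext ⟨h, t⟩ ⟨h', t'⟩
  simp only [Matrix.submatrix_apply, Matrix.of_apply, Matrix.blockDiagonal_apply, he,
    MonoidAlgebra.mapDomainRingHom_apply, MonoidAlgebra.mapDomain]
  split_ifs with htt
  · subst htt
    rw [show (t * φ h')⁻¹ * (t * φ h) = φ (h'⁻¹ * h) by simp [mul_assoc]]
    exact Finsupp.mapDomain_apply hφ _ _
  · refine Finsupp.mapDomain_of_notMem_range _ _ ?_
    rintro ⟨k, hk⟩
    refine htt (congrArg Prod.snd (e.injective (a₁ := (h, t)) (a₂ := (h' * k, t')) ?_))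
    simp [he, hk, mul_assoc]

theorem det_circulant_single_zero_sub_single_one (m : ℕ) (y : R) :
    (Matrix.circulant (Pi.single 0 1 - Pi.single 1 y : Fin (m + 1) → R)).det = 1 - y ^ (m + 1) := by
  let A : Matrix (Fin (m + 1)) (Fin (m + 1)) R := fun i j =>
    (if i = j then 1 else 0) - (if j = Fin.last m then y ^ ((i : ℕ) + 1) else 0)
  -- Adding `y` times each row to the next one makes the matrix upper triangular.
  rw [← Matrix.det_eq_of_forall_row_eq_smul_add_pred (A := A) (fun _ => y)]
  · rw [Matrix.det_of_isUpperTriangular]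
    · rw [Fin.prod_univ_castSucc]
      simp [A, (Fin.castSucc_lt_last _).ne]
    · intro i j (hij : j < i)
      simp [A, hij.ne', (hij.trans_le (Fin.le_last i)).ne]
  · intro j
    have hj : -j = 1 ↔ j = Fin.last m := by
      rw [← Fin.neg_last, neg_inj]
    simp [A, Pi.single_apply, hj, eq_comm]
  · intro i j
    have hij : i.succ - j = 1 ↔ i.castSucc = j := by
      rw [sub_eq_iff_eq_add', ← Fin.coeSucc_eq_succ, add_left_inj]
    simp only [A, Matrix.circulant_apply, Pi.sub_apply, Pi.single_apply, sub_eq_zero, hij,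
      Fin.val_succ, Fin.val_castSucc]
    split_ifs <;> ring

theorem norm_one_sub_single_ofAdd_one (n : ℕ) [NeZero n] (y : R) :
    Algebra.norm R (1 - .single (.ofAdd 1) y : MonoidAlgebra R (Multiplicative (ZMod n))) =
      1 - y ^ n := by
  obtain ⟨m, rfl⟩ := Nat.exists_eq_succ_of_ne_zero (NeZero.ne n)
  let e : Fin (m + 1) ≃ Multiplicative (ZMod (m + 1)) :=
    (ZMod.finEquiv (m + 1)).toEquiv.trans Multiplicative.ofAdd
  have he (i j : Fin (m + 1)) : (e j)⁻¹ * e i = e (i - j) := by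
    simp [e, ← ofAdd_neg, ← ofAdd_add, sub_eq_neg_add]
  have he0 : (1 : Multiplicative (ZMod (m + 1))) = e 0 := by simp [e]
  have he1 : (Multiplicative.ofAdd 1 : Multiplicative (ZMod (m + 1))) = e 1 := by simp [e]
  rw [← det_circulant_single_zero_sub_single_one, norm_monoidAlgebra_eq_det,
    ← Matrix.det_submatrix_equiv_self e]
  congr 1
  ext i j
  rw [he1, MonoidAlgebra.one_def, he0]
  simp [he, Pi.single_apply, Finsupp.single_apply, eq_comm]

theorem norm_one_sub_single [Finite G] (g : G) (y : R) :
    Algebra.norm R (1 - .single g y : MonoidAlgebra R G) =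
      (1 - y ^ orderOf g) ^ (Nat.card G / orderOf g) := by
  have : NeZero (orderOf g) := ⟨(orderOf_pos g).ne'⟩
  have hgen (x : Subgroup.zpowers g) :
      x ∈ Subgroup.zpowers (⟨g, Subgroup.mem_zpowers g⟩ : Subgroup.zpowers g) := by
    obtain ⟨_, k, rfl⟩ := x
    exact ⟨k, rfl⟩
  let e : Multiplicative (ZMod (orderOf g)) ≃* Subgroup.zpowers g :=
    zmodMulEquivOfGenerator hgen (Nat.card_zpowers g)
  let φ : Multiplicative (ZMod (orderOf g)) →* G :=
    (Subgroup.zpowers g).subtype.comp e.toMonoidHom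
  have hφ : Function.Injective φ := Subtype.val_injective.comp e.injective
  have hφg : φ (.ofAdd 1) = g :=
    congrArg Subtype.val (zmodMulEquivOfGenerator_apply_ofAdd_one hgen (Nat.card_zpowers g))
  have hmap : MonoidAlgebra.mapDomainRingHom R φ (1 - .single (.ofAdd 1) y) = 1 - .single g y := by
    rw [map_sub, map_one, MonoidAlgebra.mapDomainRingHom_apply, MonoidAlgebra.mapDomain_single,
      hφg]
  have hindex : φ.range.index = Nat.card G / orderOf g := by
    rw [← φ.range.card_mul_index, ← Nat.card_congr (φ.ofInjective hφ).toEquiv,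
      Nat.card_congr Multiplicative.toAdd, Nat.card_zmod, Nat.mul_div_cancel_left _ (orderOf_pos g)]
  rw [← hmap, norm_mapDomainRingHom_of_injective hφ, norm_one_sub_single_ofAdd_one, hindex]

end GroupAlgebra

section Factorization

variable {R : Type*} [CommRing R]

theorem one_sub_mul_sum_range {A : Type*} [Ring A] {x : ℕ → A} {p : ℕ} (h0 : x 0 = 1)
    (h : ∀ k ≤ p, x (p + 1) * x (k + 1) = x k * (x (p + 1) * x 1)) :
    (1 - x (p + 1)) * ∑ k ∈ Finset.range (p + 2), x k =
      (∑ k ∈ Finset.range (p + 1), x k) * (1 - x (p + 1) * x 1) := by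
  have hx : x (p + 1) * ∑ k ∈ Finset.range (p + 2), x k =
      (∑ k ∈ Finset.range (p + 1), x k) * (x (p + 1) * x 1) + x (p + 1) := by
    rw [Finset.sum_range_succ', h0, mul_add, mul_one, Finset.mul_sum, Finset.sum_mul]
    congr 1
    exact Finset.sum_congr rfl fun k hk => h k (Finset.mem_range_succ_iff.1 hk)
  rw [sub_mul, one_mul, hx, Finset.sum_range_succ, mul_sub, mul_one]
  abel

/-- The cycle `lowerCycle n p` in the group algebra, weighted by `q` to its number of inversions;
this is the general summand of Zagier's partial factors `∑_{k ≤ p} q ^ k c_k`. -/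
noncomputable def weightedCycle (q : R) (n p : ℕ) : MonoidAlgebra R (Equiv.Perm (Fin (n + 1))) :=
  .single (lowerCycle n p) (q ^ p)

theorem weightedCycle_zero (q : R) (n : ℕ) : weightedCycle q n 0 = 1 := by
  rw [weightedCycle, lowerCycle_zero, pow_zero, MonoidAlgebra.one_def]

theorem one_sub_weightedCycle_mul_sum (q : R) {n p : ℕ} (hp : p < n) :
    (1 - weightedCycle q n (p + 1)) * ∑ k ∈ Finset.range (p + 2), weightedCycle q n k =
      (∑ k ∈ Finset.range (p + 1), weightedCycle q n k) *
        (1 - weightedCycle q n (p + 1) * weightedCycle q n 1) := by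
  refine one_sub_mul_sum_range (weightedCycle_zero q n) fun k hk => ?_
  simp only [weightedCycle, MonoidAlgebra.single_mul_single]
  rw [lowerCycle_mul_lowerCycle_succ (Nat.lt_succ_of_le hk) hp]
  congr 1
  ring

theorem norm_one_sub_weightedCycle (q : R) {n p : ℕ} (hp : p ≤ n) :
    Algebra.norm R (1 - weightedCycle q n p) =
      (1 - q ^ ((p + 1) * p)) ^ ((n + 1).factorial / (p + 1)) := by
  rw [weightedCycle, norm_one_sub_single, orderOf_lowerCycle hp, Nat.card_perm, Nat.card_fin,
    ← pow_mul, mul_comm]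

theorem norm_one_sub_weightedCycle_succ_mul_weightedCycle_one (q : R) {n p : ℕ} (hp : p < n) :
    Algebra.norm R (1 - weightedCycle q n (p + 1) * weightedCycle q n 1) =
      (1 - q ^ ((p + 2) * (p + 1))) ^ ((n + 1).factorial / (p + 1)) := by
  rw [weightedCycle, weightedCycle, MonoidAlgebra.single_mul_single, norm_one_sub_single,
    orderOf_lowerCycle_succ_mul_lowerCycle_one hp, Nat.card_perm, Nat.card_fin, ← pow_add,
    ← pow_mul]

theorem norm_sum_weightedCycle_succ {q : R} (hq : ∀ m, 0 < m → IsLeftRegular (1 - q ^ m))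
    {n p : ℕ} (hp : p < n) :
    Algebra.norm R (∑ k ∈ Finset.range (p + 2), weightedCycle q n k) =
      Algebra.norm R (∑ k ∈ Finset.range (p + 1), weightedCycle q n k) *
        (1 - q ^ ((p + 2) * (p + 1))) ^ ((n + 1).factorial / ((p + 2) * (p + 1))) := by
  have hdvd : (p + 1) * (p + 2) ∣ (n + 1).factorial := by
    refine dvd_trans ?_ (Nat.factorial_dvd_factorial (show p + 2 ≤ n + 1 by omega))
    rw [Nat.factorial_succ, Nat.factorial_succ, ← mul_assoc, mul_comm (p + 1)]
    exact dvd_mul_right _ _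
  have h := congrArg (Algebra.norm R) (one_sub_weightedCycle_mul_sum q hp)
  rw [map_mul, map_mul, norm_one_sub_weightedCycle q hp,
    norm_one_sub_weightedCycle_succ_mul_weightedCycle_one q hp,
    div_eq_div_succ_add_div_mul p.succ_pos hdvd, pow_add, mul_left_comm] at h
  exact (hq _ (by positivity)).pow _ h

theorem norm_sum_weightedCycle_of_isLeftRegular {q : R}
    (hq : ∀ m, 0 < m → IsLeftRegular (1 - q ^ m)) {n p : ℕ} (hp : p ≤ n) :
    Algebra.norm R (∑ k ∈ Finset.range (p + 1), weightedCycle q n k) =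
      ∏ k ∈ Finset.Icc 2 (p + 1),
        (1 - q ^ (k * (k - 1))) ^ ((n + 1).factorial / (k * (k - 1))) := by
  induction p with
  | zero => simp [weightedCycle_zero]
  | succ p ih =>
    rw [Finset.prod_Icc_succ_top (show 2 ≤ p + 1 + 1 by omega),
      norm_sum_weightedCycle_succ hq hp, ih (by omega)]
    rfl

theorem isLeftRegular_one_sub_X_pow {m : ℕ} (hm : 0 < m) :
    IsLeftRegular (1 - Polynomial.X ^ m : Polynomial R) := by
  intro a b h
  refine (Polynomial.monic_X_pow_sub_C (1 : R) hm.ne').isRegular.left ?_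
  rw [Polynomial.C_1]
  linear_combination -h

theorem norm_sum_weightedCycle (q : R) {n p : ℕ} (hp : p ≤ n) :
    Algebra.norm R (∑ k ∈ Finset.range (p + 1), weightedCycle q n k) =
      ∏ k ∈ Finset.Icc 2 (p + 1),
        (1 - q ^ (k * (k - 1))) ^ ((n + 1).factorial / (k * (k - 1))) := by
  let f : Polynomial R →+* R := Polynomial.evalRingHom q
  have hf : f Polynomial.X = q := Polynomial.eval_X
  have hmap : MonoidAlgebra.mapRingHom _ f (∑ k ∈ Finset.range (p + 1),
      weightedCycle Polynomial.X n k) = ∑ k ∈ Finset.range (p + 1), weightedCycle q n k := by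
    simp [weightedCycle, hf]
  rw [← hmap, norm_mapRingHom,
    norm_sum_weightedCycle_of_isLeftRegular (fun _ => isLeftRegular_one_sub_X_pow) hp]
  simp [hf]

/-- The element `∑_g q ^ inv(g) g` of the group algebra of `S_n`, whose matrix in the right regular
representation is `(q ^ inv(τ⁻¹σ))_{σ,τ}`. -/
noncomputable def inversionSum (q : R) (n : ℕ) : MonoidAlgebra R (Equiv.Perm (Fin n)) :=
  ∑ g, .single g (q ^ inv_count g 1)

theorem coeff_inversionSum (q : R) {n : ℕ} (g : Equiv.Perm (Fin n)) :
    (inversionSum q n).coeff g = q ^ inv_count g 1 := by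
  classical
  simp [inversionSum, MonoidAlgebra.coeff_sum, Finsupp.single_apply]

theorem inversionSum_succ (q : R) (n : ℕ) :
    inversionSum q (n + 1) = (∑ k ∈ Finset.range (n + 1), weightedCycle q n k) *
      MonoidAlgebra.mapDomainRingHom R (permSuccHom n) (inversionSum q n) := by
  rw [inversionSum, inversionSum, map_sum, ← Fin.sum_univ_eq_sum_range, Finset.sum_mul_sum,
    ← Fintype.sum_prod_type', ← (lowerCycle_mul_permSuccHom_bijective n).sum_comp]
  refine Finset.sum_congr rfl fun x _ => ?_
  rw [weightedCycle, MonoidAlgebra.mapDomainRingHom_apply, MonoidAlgebra.mapDomain_single,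
    MonoidAlgebra.single_mul_single, inv_count_lowerCycle_mul_permSuccHom, pow_add]

theorem norm_inversionSum_succ (q : R) (n : ℕ) :
    Algebra.norm R (inversionSum q (n + 1)) =
      (∏ k ∈ Finset.Icc 2 (n + 1),
        (1 - q ^ (k * (k - 1))) ^ ((n + 1).factorial / (k * (k - 1)))) *
      Algebra.norm R (inversionSum q n) ^ (n + 1) := by
  rw [inversionSum_succ, map_mul, norm_sum_weightedCycle q le_rfl,
    norm_mapDomainRingHom_of_injective (permSuccHom_injective n), index_range_permSuccHom]

theorem norm_inversionSum (q : R) (n : ℕ) :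
    Algebra.norm R (inversionSum q n) =
      ∏ k ∈ Finset.Icc 2 n,
        (1 - q ^ (k * (k - 1))) ^ (n.choose k * (k - 2).factorial * (n - k + 1).factorial) := by
  induction n with
  | zero => simp [norm_monoidAlgebra_eq_det, coeff_inversionSum, inv_count]
  | succ n ih =>
    have hextend : (∏ k ∈ Finset.Icc 2 n, (1 - q ^ (k * (k - 1)))
          ^ (n.choose k * (k - 2).factorial * (n - k + 1).factorial)) =
        ∏ k ∈ Finset.Icc 2 (n + 1), (1 - q ^ (k * (k - 1)))
          ^ (n.choose k * (k - 2).factorial * (n - k + 1).factorial) := by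
      refine Finset.prod_subset (Finset.Icc_subset_Icc_right n.le_succ) fun k hk hk' => ?_
      rw [Nat.choose_eq_zero_of_lt (by grind)]
      simp
    rw [norm_inversionSum_succ, ih, hextend, ← Finset.prod_pow, ← Finset.prod_mul_distrib]
    refine Finset.prod_congr rfl fun k hk => ?_
    obtain ⟨hk2, hkn⟩ := Finset.mem_Icc.1 hk
    rw [choose_succ_mul_factorial_mul_factorial hk2 hkn, pow_add _ (_ / _),
      pow_mul _ (_ * _) (n + 1)]

end Factorization

theorem det_q_inversion_matrix_general {R : Type*} [CommRing R] (q : R) (n : ℕ) :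
    Matrix.det (Matrix.of fun σ τ : Equiv.Perm (Fin n) => q ^ inv_count σ τ) =
      ∏ k ∈ Finset.Icc 2 n,
        (1 - q ^ (k * (k - 1))) ^ (n.choose k * (k - 2).factorial * (n - k + 1).factorial) := by
  simp_rw [← norm_inversionSum, norm_monoidAlgebra_eq_det, coeff_inversionSum,
    ← inv_count_eq_inv_count_one]

theorem det_q_inversion_matrix (n : ℕ) (hn : 2 ≤ n) :
    Matrix.det (Matrix.of fun σ τ : Equiv.Perm (Fin n) =>
        (Polynomial.X : Polynomial ℤ) ^ inv_count σ τ) =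
      ∏ k ∈ Finset.Icc 2 n,
        (1 - (Polynomial.X : Polynomial ℤ) ^ (k * (k - 1)))
          ^ (n.choose k * (k - 2).factorial * (n - k + 1).factorial) :=
  det_q_inversion_matrix_general Polynomial.X n
end

section
/- Let n be a positive integer, λ = (p_1,…,p_k) a partition of n, f : {1,…,n} → {1,…,k} the map with f(s) = i exactly when p_1+⋯+p_{i−1} < s ≤ p_1+⋯+p_i, and G = {φ ∈ S_n : f∘φ = f}. Let σ, τ ∈ S_n, and write σ̇ = f∘σ and τ̇ = f∘τ (words of length n in the alphabet {1,…,k}). Then in the multiparametric quon algebra A: a_{σ̇(n)}⋯a_{σ̇(1)} · a†_{τ̇(1)}⋯a†_{τ̇(n)} − c·1 belongs to L + Rt, where c = Σ_{φ ∈ G} ∏ q_{f(σ(s)),f(σ(t))}, the inner product over pairs (s,t) with 1 ≤ s < t ≤ n and τ⁻¹(φ(σ(s))) > τ⁻¹(φ(σ(t))). (Equivalently, ⟨0| a_{σ̇(n)}⋯a_{σ̇(1)} a†_{τ̇(1)}⋯a†_{τ̇(n)} |0⟩ = c, and in particular this value does not depend on the chosen representative τ of τ̇.) -/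
/-- The coefficient ring `R = ℂ[q_{i,j} : i,j ∈ ℕ⁺]`. -/
abbrev QR : Type := MvPolynomial (ℕ+ × ℕ+) ℂ

/-- The quon relations `a_i a_j† = q_{i,j} a_j† a_i + δ_{i,j}` on the free
`R`-algebra on the symbols `a_i` (`Sum.inl i`) and `a_i†` (`Sum.inr i`). -/
inductive QuonRel : FreeAlgebra QR (ℕ+ ⊕ ℕ+) → FreeAlgebra QR (ℕ+ ⊕ ℕ+) → Prop
  | rel (i j : ℕ+) : QuonRel
      (FreeAlgebra.ι QR (Sum.inl i) * FreeAlgebra.ι QR (Sum.inr j))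
      ((MvPolynomial.X (i, j) : QR) •
          (FreeAlgebra.ι QR (Sum.inr j) * FreeAlgebra.ι QR (Sum.inl i))
        + if i = j then 1 else 0)

/-- The multiparametric quon algebra `A`. -/
abbrev QuonAlg : Type := RingQuot QuonRel

/-- The annihilation operator `a_i`. -/
noncomputable def ann (i : ℕ+) : QuonAlg :=
  RingQuot.mkAlgHom QR QuonRel (FreeAlgebra.ι QR (Sum.inl i))

/-- The creation operator `a_i†`. -/
noncomputable def cre (i : ℕ+) : QuonAlg :=
  RingQuot.mkAlgHom QR QuonRel (FreeAlgebra.ι QR (Sum.inr i))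

/-- The left ideal `L = Σ_i A·a_i`, as an `R`-submodule of `A`. -/
noncomputable def leftIdeal : Submodule QR QuonAlg :=
  Submodule.span QR {x : QuonAlg | ∃ y : QuonAlg, ∃ i : ℕ+, x = y * ann i}

/-- The right ideal `Rt = Σ_j a_j†·A`, as an `R`-submodule of `A`. -/
noncomputable def rightIdeal : Submodule QR QuonAlg :=
  Submodule.span QR {x : QuonAlg | ∃ y : QuonAlg, ∃ j : ℕ+, x = cre j * y}

/-- The Young subgroup `G = {φ ∈ S_n : f ∘ φ = f}` (as a finset). -/
def youngG {n k : ℕ} (f : Fin n → Fin k) : Finset (Equiv.Perm (Fin n)) :=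
  Finset.univ.filter fun φ => f ∘ ⇑φ = f

/-!
Work modulo the left ideal generated by the annihilation operators `a i`. Moving `a (w 0)` to the
right through the word `b (v 0) ⋯ b (v n)` either contracts it with some `b (v j)`, `v j = w 0`,
at the cost of the factors `q (w 0) (v l)` for the letters `l < j` it has crossed, or carries it to
the right end, where it vanishes. Iterating, a complete contraction is a permutation `π` with
`v ∘ π = w`. Removing its first value `j = π 0` removes exactly the inversions of `π` that involve
the position `0`, and these correspond to the `l < j`; so the weight of `π` is the product of the
`q (w s) (w t)` over all its inversions. For `w = f ∘ σ` and `v = f ∘ τ`, the matching permutations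
are the `τ⁻¹ * φ * σ` with `f ∘ φ = f`.
-/

open Finset Equiv

theorem prod_Iio_fin_succ {M : Type*} [CommMonoid M] {n : ℕ} (g : Fin (n + 1) → M) (j : Fin n) :
    ∏ l ∈ Iio j.succ, g l = g 0 * ∏ l ∈ Iio j, Fin.tail g l := by
  simp [← filter_gt_eq_Iio, prod_filter, Fin.prod_univ_succ, Fin.tail]

theorem prod_succAbove_lt_eq_prod_Iio {M : Type*} [CommMonoid M] {n : ℕ} (j : Fin (n + 1))
    (g : Fin (n + 1) → M) :
    ∏ s : Fin n with j.succAbove s < j, g (j.succAbove s) = ∏ l ∈ Iio j, g l := by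
  simp [← filter_gt_eq_Iio, prod_filter, Fin.prod_univ_succAbove _ j]

theorem ofFn_comp_removeNth_succ {α β : Type*} {n : ℕ} (g : α → β) (v : Fin (n + 2) → α)
    (j : Fin (n + 1)) :
    List.ofFn (g ∘ j.succ.removeNth v) = g (v 0) :: List.ofFn (g ∘ j.removeNth (Fin.tail v)) := by
  simp [List.ofFn_succ, Fin.removeNth, Fin.tail, Function.comp_def]

section Inversions

variable {α β γ M : Type*} [CommMonoid M]

/-- The product of the weights `c s t` over the inversions of `g`, that is, over the pairs `s < t`
with `g t < g s`. -/
def inversionProd [Fintype α] [LT α] [DecidableLT α] [LT β] [DecidableLT β] (c : α → α → M)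
    (g : α → β) : M :=
  ∏ p : α × α with p.1 < p.2 ∧ g p.2 < g p.1, c p.1 p.2

theorem inversionProd_comp_strictMono [Fintype α] [LT α] [DecidableLT α] [LinearOrder β]
    [Preorder γ] [DecidableLT γ] (c : α → α → M) (g : α → β) {e : β → γ} (he : StrictMono e) :
    inversionProd c (e ∘ g) = inversionProd c g := by
  simp only [inversionProd, Function.comp_apply, he.lt_iff_lt]

theorem inversionProd_succ [LT β] [DecidableLT β] {n : ℕ} (c : Fin (n + 1) → Fin (n + 1) → M)
    (g : Fin (n + 1) → β) :
    inversionProd c g =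
      (∏ s : Fin n with g s.succ < g 0, c 0 s.succ) *
        inversionProd (fun s t => c s.succ t.succ) (Fin.tail g) := by
  simp only [inversionProd, prod_filter, Fintype.prod_prod_type, Fin.prod_univ_succ, false_and,
    if_false, Fin.succ_pos, true_and, one_mul, not_lt_zero, Fin.succ_lt_succ_iff]
  rfl

end Inversions

section PermCons

variable {n : ℕ}

/-- The permutation of `Fin (n + 1)` whose one-line notation is `j` followed by that of `π`, the
values of `π` being relabelled increasingly so as to avoid `j`. -/
def permCons (j : Fin (n + 1)) (π : Perm (Fin n)) : Perm (Fin (n + 1)) :=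
  j.cycleRange.symm * Perm.decomposeFin.symm (0, π)

@[simp]
theorem permCons_zero (j : Fin (n + 1)) (π : Perm (Fin n)) : permCons j π 0 = j := by
  simp [permCons]

@[simp]
theorem permCons_succ (j : Fin (n + 1)) (π : Perm (Fin n)) (s : Fin n) :
    permCons j π s.succ = j.succAbove (π s) := by
  simp [permCons]

theorem permCons_bijective :
    Function.Bijective fun x : Fin (n + 1) × Perm (Fin n) => permCons x.1 x.2 := by
  rw [Fintype.bijective_iff_injective_and_card]
  refine ⟨?_, by simp [Fintype.card_perm, Nat.factorial_succ]⟩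
  rintro ⟨j, π⟩ ⟨j', π'⟩ (h : permCons j π = permCons j' π')
  obtain rfl : j = j' := by simpa using DFunLike.congr_fun h 0
  simpa [permCons] using h

theorem comp_permCons_eq_iff {ι : Type*} {w v : Fin (n + 1) → ι} {j : Fin (n + 1)}
    {π : Perm (Fin n)} :
    v ∘ permCons j π = w ↔ v j = w 0 ∧ j.removeNth v ∘ π = Fin.tail w := by
  simp [funext_iff, Fin.forall_fin_succ, Fin.removeNth, Fin.tail]

theorem inversionProd_permCons {M : Type*} [CommMonoid M] (c : Fin (n + 1) → Fin (n + 1) → M)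
    (j : Fin (n + 1)) (π : Perm (Fin n)) :
    inversionProd c (permCons j π) =
      (∏ l ∈ Iio j, c 0 ((permCons j π).symm l)) *
        inversionProd (fun s t => c s.succ t.succ) π := by
  have htail : Fin.tail (permCons j π) = j.succAbove ∘ π := funext (permCons_succ j π)
  have hsymm (s : Fin n) : (permCons j π).symm (j.succAbove (π s)) = s.succ := by
    rw [← permCons_succ, symm_apply_apply]
  rw [inversionProd_succ, htail, inversionProd_comp_strictMono _ _ j.strictMono_succAbove,
    ← prod_succAbove_lt_eq_prod_Iio, prod_filter, prod_filter,
    ← Equiv.prod_comp π fun s => ite (j.succAbove s < j) _ _]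
  simp only [permCons_zero, permCons_succ, hsymm]

end PermCons

section WordPairing

variable {ι R : Type*} [DecidableEq ι] [CommSemiring R] {n : ℕ}

/-- The `q`-deformed pairing of two words: the sum, over the permutations `π` matching each letter
of `w` with an equal letter of `v`, of the product of the `q (w s) (w t)` over the inversions
`s < t` of `π`. -/
def wordPairing (q : ι → ι → R) (w v : Fin n → ι) : R :=
  ∑ π ∈ {π : Perm (Fin n) | v ∘ π = w}, inversionProd (fun s t => q (w s) (w t)) π

@[simp]
theorem wordPairing_zero (q : ι → ι → R) (w v : Fin 0 → ι) : wordPairing q w v = 1 := by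
  simp [wordPairing, inversionProd, filter_true_of_mem, Subsingleton.elim _ w]

theorem wordPairing_succ (q : ι → ι → R) (w v : Fin (n + 1) → ι) :
    wordPairing q w v =
      ∑ j with v j = w 0,
        (∏ l ∈ Iio j, q (w 0) (v l)) * wordPairing q (Fin.tail w) (j.removeNth v) := by
  have hweight (j : Fin (n + 1)) (π : Perm (Fin n)) (h : v ∘ permCons j π = w) :
      inversionProd (fun s t => q (w s) (w t)) (permCons j π) =
        (∏ l ∈ Iio j, q (w 0) (v l)) *
          inversionProd (fun s t => q (Fin.tail w s) (Fin.tail w t)) π := by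
    have hv (l : Fin (n + 1)) : w ((permCons j π).symm l) = v l := by simp [← h]
    simp only [inversionProd_permCons, hv, Fin.tail]
  simp only [wordPairing, sum_filter, mul_sum, mul_ite, mul_zero]
  rw [← permCons_bijective.sum_comp, Fintype.sum_prod_type]
  refine sum_congr rfl fun j _ => ?_
  split_ifs with hj
  · refine sum_congr rfl fun π _ => ?_
    have hiff : v ∘ permCons j π = w ↔ j.removeNth v ∘ π = Fin.tail w := by
      rw [comp_permCons_eq_iff, and_iff_right hj]
    exact ite_congr (propext hiff) (fun h => hweight j π (hiff.2 h)) fun _ => rfl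
  · simp [comp_permCons_eq_iff, hj]

theorem wordPairing_comp_perm (q : ι → ι → R) (f : Fin n → ι) (σ τ : Perm (Fin n)) :
    wordPairing q (f ∘ σ) (f ∘ τ) =
      ∑ φ ∈ {φ : Perm (Fin n) | f ∘ φ = f},
        inversionProd (fun s t => q (f (σ s)) (f (σ t))) (τ⁻¹ * φ * σ) := by
  have hiff (φ : Perm (Fin n)) : (f ∘ τ) ∘ ⇑(τ⁻¹ * φ * σ) = f ∘ σ ↔ f ∘ φ = f := by
    have hcomp : (f ∘ τ) ∘ ⇑(τ⁻¹ * φ * σ) = (f ∘ φ) ∘ σ := by ext; simp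
    rw [hcomp, σ.surjective.injective_comp_right.eq_iff]
  simp only [wordPairing, sum_filter]
  rw [← ((Equiv.mulLeft τ⁻¹).trans (Equiv.mulRight σ)).sum_comp]
  simp only [Equiv.trans_apply, Equiv.coe_mulLeft, Equiv.coe_mulRight, hiff, Function.comp_apply]

end WordPairing

theorem smodEq_smul_of_tower {S R M : Type*} [Ring S] [Ring R] [AddCommGroup M] [Module R M]
    [Module S M] [SMul S R] [IsScalarTower S R M] {U : Submodule R M} {x y : M}
    (h : x ≡ y [SMOD U]) (s : S) : s • x ≡ s • y [SMOD U] :=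
  (SModEq.restrictScalars S).1 (((SModEq.restrictScalars S).2 h).smul s)

/-- The quon relations with deformation parameters `q`, for a family `a` of annihilation operators
and a family `b` of creation operators in an arbitrary algebra. -/
def IsQuonSystem {ι R A : Type*} [DecidableEq ι] [CommSemiring R] [Semiring A] [Algebra R A]
    (q : ι → ι → R) (a b : ι → A) : Prop :=
  ∀ i j, a i * b j = q i j • (b j * a i) + if i = j then 1 else 0

namespace IsQuonSystem

theorem comp_injective {ι κ R A : Type*} [DecidableEq ι] [DecidableEq κ] [CommSemiring R]
    [Semiring A] [Algebra R A] {q : ι → ι → R} {a b : ι → A} (h : IsQuonSystem q a b)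
    {c : κ → ι} (hc : c.Injective) :
    IsQuonSystem (fun i j => q (c i) (c j)) (a ∘ c) (b ∘ c) := fun i j => by
  simp only [Function.comp_apply, h (c i) (c j), hc.eq_iff]

variable {ι R A : Type*} [DecidableEq ι] [CommRing R] [Ring A] [Algebra R A]
  {q : ι → ι → R} {a b : ι → A} {n : ℕ}

theorem mul_prod_smodEq (h : IsQuonSystem q a b) (i : ι) (v : Fin (n + 1) → ι) :
    a i * (List.ofFn (b ∘ v)).prod ≡
      ∑ j with v j = i, (∏ l ∈ Iio j, q i (v l)) • (List.ofFn (b ∘ j.removeNth v)).prod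
      [SMOD Ideal.span (Set.range a)] := by
  induction n with
  | zero =>
    have ha : (q i (v 0) • b (v 0)) * a i ≡ 0 [SMOD Ideal.span (Set.range a)] :=
      SModEq.zero.2 <| Ideal.mul_mem_left _ _ (Ideal.subset_span (Set.mem_range_self i))
    simpa [h i (v 0), sum_filter, eq_comm, ← filter_gt_eq_Iio] using ha.add .rfl
  | succ n ih =>
    set B := (List.ofFn (b ∘ Fin.tail v)).prod
    calc a i * (List.ofFn (b ∘ v)).prod
        = a i * b (v 0) * B := by
          rw [List.ofFn_succ, List.prod_cons, ← mul_assoc]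
          rfl
      _ = (if v 0 = i then B else 0) + q i (v 0) • (b (v 0) * (a i * B)) := by
          simp only [h i (v 0), add_mul, smul_mul_assoc, mul_assoc, ite_mul, one_mul, zero_mul,
            eq_comm (a := i), add_comm]
      _ ≡ (if v 0 = i then B else 0) + q i (v 0) • (b (v 0) *
            ∑ j with Fin.tail v j = i, (∏ l ∈ Iio j, q i (Fin.tail v l)) •
              (List.ofFn (b ∘ j.removeNth (Fin.tail v))).prod)
            [SMOD Ideal.span (Set.range a)] :=
          SModEq.rfl.add <| smodEq_smul_of_tower ((ih (Fin.tail v)).smul (b (v 0))) _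
      _ = ∑ j with v j = i, (∏ l ∈ Iio j, q i (v l)) • (List.ofFn (b ∘ j.removeNth v)).prod := by
          simp only [sum_filter, Fin.sum_univ_succ (n := n + 1), ofFn_comp_removeNth_succ,
            prod_Iio_fin_succ, mul_sum, smul_sum, List.prod_cons, mul_ite, smul_ite, mul_zero,
            smul_zero, mul_smul_comm, smul_smul]
          simp [Fin.tail, B, ← filter_gt_eq_Iio]

theorem prod_mul_prod_smodEq (h : IsQuonSystem q a b) (w v : Fin n → ι) :
    (List.ofFn (a ∘ w)).reverse.prod * (List.ofFn (b ∘ v)).prod ≡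
      wordPairing q w v • (1 : A) [SMOD Ideal.span (Set.range a)] := by
  induction n with
  | zero => simp
  | succ n ih =>
    set W := (List.ofFn (a ∘ Fin.tail w)).reverse.prod
    calc (List.ofFn (a ∘ w)).reverse.prod * (List.ofFn (b ∘ v)).prod
        = W * (a (w 0) * (List.ofFn (b ∘ v)).prod) := by
          rw [List.ofFn_succ, List.reverse_cons, List.prod_append, List.prod_singleton, mul_assoc]
          rfl
      _ ≡ W * ∑ j with v j = w 0, (∏ l ∈ Iio j, q (w 0) (v l)) •
            (List.ofFn (b ∘ j.removeNth v)).prod [SMOD Ideal.span (Set.range a)] :=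
          (h.mul_prod_smodEq (w 0) v).smul W
      _ = ∑ j with v j = w 0, (∏ l ∈ Iio j, q (w 0) (v l)) •
            (W * (List.ofFn (b ∘ j.removeNth v)).prod) := by
          simp only [mul_sum, mul_smul_comm]
      _ ≡ ∑ j with v j = w 0, (∏ l ∈ Iio j, q (w 0) (v l)) •
            wordPairing q (Fin.tail w) (j.removeNth v) • (1 : A)
            [SMOD Ideal.span (Set.range a)] :=
          .sum fun j _ => smodEq_smul_of_tower (ih (Fin.tail w) (j.removeNth v)) _
      _ = wordPairing q w v • (1 : A) := by
          simp only [wordPairing_succ, sum_smul, mul_smul]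

end IsQuonSystem

theorem isQuonSystem_ann_cre :
    IsQuonSystem (fun i j => (MvPolynomial.X (i, j) : QR)) ann cre := fun i j => by
  have h := RingQuot.mkAlgHom_rel QR (QuonRel.rel i j)
  rw [map_add, map_smul, map_mul, map_mul] at h
  rw [ann, cre, h]
  split_ifs <;> simp

theorem mem_leftIdeal_of_mem_span_range_ann {κ : Type*} {c : κ → ℕ+} {x : QuonAlg}
    (hx : x ∈ Ideal.span (Set.range (ann ∘ c))) : x ∈ leftIdeal := by
  obtain ⟨y, rfl⟩ := Finsupp.mem_ideal_span_range_iff_exists_finsupp.1 hx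
  exact sum_mem fun i _ => Submodule.subset_span ⟨y i, c i, rfl⟩

theorem braket_multiset_eq_general {ι R A : Type*} [DecidableEq ι] [CommRing R] [Ring A]
    [Algebra R A] {q : ι → ι → R} {a b : ι → A} (h : IsQuonSystem q a b) {n : ℕ}
    (f : Fin n → ι) (σ τ : Perm (Fin n)) :
    (List.ofFn fun u => a (f (σ u))).reverse.prod * (List.ofFn fun u => b (f (τ u))).prod -
        (∑ φ ∈ {φ : Perm (Fin n) | f ∘ φ = f},
          ∏ p : Fin n × Fin n with p.1 < p.2 ∧ τ⁻¹ (φ (σ p.2)) < τ⁻¹ (φ (σ p.1)),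
            q (f (σ p.1)) (f (σ p.2))) • (1 : A) ∈
      Ideal.span (Set.range a) := by
  have hpair := h.prod_mul_prod_smodEq (f ∘ σ) (f ∘ τ)
  rw [wordPairing_comp_perm] at hpair
  exact SModEq.sub_mem.1 hpair

/-- For a partition `λ = (p_1,…,p_k)` of `n` with associated block map
`f : {1,…,n} → {1,…,k}` and Young subgroup `G`, and `σ, τ ∈ S_n`:
`⟨0| a_{σ̇(n)}⋯a_{σ̇(1)} a†_{τ̇(1)}⋯a†_{τ̇(n)} |0⟩
  = Σ_{φ∈G} ∏_{s<t, τ⁻¹(φσ(s)) > τ⁻¹(φσ(t))} q_{f(σ(s)),f(σ(t))}`,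
where `σ̇ = f∘σ`, `τ̇ = f∘τ`, and the element `a ∈ {1,…,k}` is identified with
the positive integer `a`. -/
theorem braket_multiset_eq (n k : ℕ) (hn : 0 < n)
    (p : Fin k → ℕ) (hpos : ∀ i, 0 < p i)
    (hmono : ∀ i j : Fin k, i ≤ j → p j ≤ p i) (hsum : ∑ i, p i = n)
    (f : Fin n → Fin k)
    (hf : ∀ (s : Fin n) (i : Fin k),
      f s = i ↔ ∑ j ∈ Finset.Iio i, p j ≤ (s : ℕ) ∧
        (s : ℕ) < ∑ j ∈ Finset.Iic i, p j)
    (σ τ : Equiv.Perm (Fin n)) :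
    (List.ofFn fun u : Fin n => ann ((f (σ u) : ℕ).succPNat)).reverse.prod *
        (List.ofFn fun u : Fin n => cre ((f (τ u) : ℕ).succPNat)).prod
      - (∑ φ ∈ youngG f,
          ∏ q ∈ Finset.univ.filter
              (fun q : Fin n × Fin n =>
                q.1 < q.2 ∧ τ⁻¹ (φ (σ q.2)) < τ⁻¹ (φ (σ q.1))),
            (MvPolynomial.X
              ((f (σ q.1) : ℕ).succPNat, (f (σ q.2) : ℕ).succPNat) : QR)) •
        (1 : QuonAlg)
      ∈ leftIdeal ⊔ rightIdeal := by
  have hlabel : Function.Injective fun i : Fin k => (i : ℕ).succPNat :=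
    Nat.succPNat_injective.comp Fin.val_injective
  have hmem := braket_multiset_eq_general (R := QR) (A := QuonAlg)
    (isQuonSystem_ann_cre.comp_injective hlabel) f σ τ
  exact Submodule.mem_sup_left (mem_leftIdeal_of_mem_span_range_ann hmem)
end

section
/- Let n ≥ 2 be an integer and q a single polynomial indeterminate. Let M be the n!×n! matrix over ℤ[q], indexed by permutations σ, τ of {1,…,n}, whose (σ,τ) entry is q^{ι(σ,τ)}, where ι(σ,τ) = #{(i,j) : 1 ≤ i < j ≤ n and τ⁻¹(σ(i)) > τ⁻¹(σ(j))}. Let D = ∏_{i=1}^{n−1} (1 − q^{i²+i})^{n−i} ∈ ℤ[q]. Then there exists a matrix N with entries in ℤ[q] such that M·N = D·(identity matrix) and N·M = D·(identity matrix). (Equivalently, every entry of M⁻¹, computed over the field of rational functions, can be written with denominator dividing ∏_{i=1}^{n−1} (1 − q^{i²+i})^{n−i}.) -/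
/-!
Write `M` as the image of `∑ π, q ^ inv π • π` under the regular representation. Sorting
`π ∈ S_{m+1}` by the value of `π` at the last point gives `π = t_k ρ` with `ρ ∈ S_m`, where
`t_k = s_k ⋯ s_{m-1}` has `m - k` inversions and inversions add up, so the sum over `S_n` is the
product of the coset sums `C_{0,m}` with `m < n`, where `C_{j,m} = ∑_{j ≤ k ≤ m} q ^ (m - k) t_k`.
Zagier's identity

  `(1 - q ^ (m + 1 - j) s_j ⋯ s_m) C_{j,m+1} = C_{j+1,m+1} (1 - q ^ (m + 2 - j) s_j ⋯ s_{m-1})`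

peels these off one factor at a time. As `s_j ⋯ s_{m-1}` is a cycle of length `l = m + 1 - j`, a
geometric sum inverts the last factor up to `1 - q ^ (l * (l + 1))`, and the product of these
denominators is `D`. A left inverse of a square matrix up to a regular scalar is two-sided.
-/

open Finset Equiv

section LeftInverse

variable {K R : Type*}

/-- `x` has a left inverse in the `K`-algebra `R` once the denominator `d` is allowed. -/
def HasLeftInverseUpTo [CommSemiring K] [Semiring R] [Algebra K R] (d : K) (x : R) : Prop :=
  ∃ y : R, y * x = d • 1

namespace HasLeftInverseUpTo

section Semiring

variable [CommSemiring K] [Semiring R] [Algebra K R] {d e : K} {x y : R}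

theorem one : HasLeftInverseUpTo (1 : K) (1 : R) :=
  ⟨1, by simp⟩

theorem mul (hx : HasLeftInverseUpTo d x) (hy : HasLeftInverseUpTo e y) :
    HasLeftInverseUpTo (d * e) (x * y) := by
  obtain ⟨a, ha⟩ := hx
  obtain ⟨b, hb⟩ := hy
  exact ⟨b * a, by
    rw [mul_assoc, ← mul_assoc a, ha, smul_mul_assoc, one_mul, mul_smul_comm, hb, smul_smul]⟩

theorem of_mul (h : HasLeftInverseUpTo d (x * y)) : HasLeftInverseUpTo d y := by
  obtain ⟨a, ha⟩ := h
  exact ⟨a * x, by rw [mul_assoc, ha]⟩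

end Semiring

theorem one_sub_smul [CommRing K] [Ring R] [Algebra K R] {t : R} {l : ℕ} (ht : t ^ l = 1) (c : K) :
    HasLeftInverseUpTo (1 - c ^ l) (1 - c • t) :=
  ⟨∑ i ∈ range l, (c • t) ^ i, by rw [geom_sum_mul_neg, smul_pow, ht, sub_smul, one_smul]⟩

end HasLeftInverseUpTo

end LeftInverse

section ConsecutiveProd

variable {G : Type*} [Monoid G]

/-- The product `s j * s (j + 1) * ⋯ * s (m - 1)`, equal to `1` when `m ≤ j`. For the adjacent
transpositions of a symmetric group this is the cycle `j → j + 1 → ⋯ → m → j`. -/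
def consecutiveProd (s : ℕ → G) (j m : ℕ) : G :=
  ((List.Ico j m).map s).prod

theorem map_consecutiveProd {H : Type*} [Monoid H] (f : G →* H) (s : ℕ → G) (j m : ℕ) :
    f (consecutiveProd s j m) = consecutiveProd (f ∘ s) j m := by
  simp only [consecutiveProd, map_list_prod, List.map_map]

variable (s : ℕ → G) {j m : ℕ}

theorem consecutiveProd_self (j : ℕ) : consecutiveProd s j j = 1 := by
  simp [consecutiveProd]

theorem consecutiveProd_succ_right (h : j ≤ m) :
    consecutiveProd s j (m + 1) = consecutiveProd s j m * s m := by
  simp [consecutiveProd, List.Ico.succ_top h]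

theorem consecutiveProd_eq_mul (h : j < m) :
    consecutiveProd s j m = s j * consecutiveProd s (j + 1) m := by
  simp [consecutiveProd, List.Ico.eq_cons h]

theorem consecutiveProd_mul_consecutiveProd {k : ℕ} (hjk : j ≤ k) (hkm : k ≤ m) :
    consecutiveProd s j k * consecutiveProd s k m = consecutiveProd s j m := by
  rw [consecutiveProd, consecutiveProd, ← List.prod_append, ← List.map_append,
    List.Ico.append_consecutive hjk hkm, consecutiveProd]

end ConsecutiveProd

/-- The Coxeter relations of type `A_N` for `s 0, …, s (N - 1)`, which are those of the adjacent
transpositions of `N + 1` points. The values of `s` beyond `N` are unconstrained. -/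
structure IsCoxeterFamily {G : Type*} [Monoid G] (s : ℕ → G) (N : ℕ) : Prop where
  sq : ∀ i < N, s i * s i = 1
  comm : ∀ i j, i + 1 < j → j < N → Commute (s i) (s j)
  braid : ∀ i, i + 1 < N → s i * s (i + 1) * s i = s (i + 1) * s i * s (i + 1)

namespace IsCoxeterFamily

variable {G : Type*} [Monoid G] {s : ℕ → G} {N : ℕ}

theorem map {H : Type*} [Monoid H] (hs : IsCoxeterFamily s N) (f : G →* H) :
    IsCoxeterFamily (f ∘ s) N where
  sq i hi := by simp only [Function.comp_apply, ← map_mul, hs.sq i hi, map_one]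
  comm i j hij hj := (hs.comm i j hij hj).map f
  braid i hi := by simp only [Function.comp_apply, ← map_mul, hs.braid i hi]

theorem commute_consecutiveProd (hs : IsCoxeterFamily s N) {i j m : ℕ} (hi : i < N) (hm : m ≤ N)
    (h : i + 1 < j ∨ m < i) : Commute (consecutiveProd s j m) (s i) := by
  refine Commute.list_prod_left _ _ fun x hx => ?_
  obtain ⟨l, hl, rfl⟩ := List.mem_map.mp hx
  obtain ⟨hjl, hlm⟩ := List.Ico.mem.mp hl
  rcases h with h | h
  · exact (hs.comm i l (by omega) (by omega)).symm
  · exact hs.comm l i (by omega) hi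

theorem semiconjBy_consecutiveProd_succ (hs : IsCoxeterFamily s N) {i j m : ℕ} (hji : j ≤ i)
    (him : i < m) (hm : m < N) : SemiconjBy (consecutiveProd s j (m + 1)) (s i) (s (i + 1)) := by
  rw [← consecutiveProd_mul_consecutiveProd s hji (by omega : i ≤ m + 1),
    consecutiveProd_eq_mul s (by omega : i < m + 1),
    consecutiveProd_eq_mul s (by omega : i + 1 < m + 1), ← mul_assoc (s i)]
  have hbraid : SemiconjBy (s i * s (i + 1)) (s i) (s (i + 1)) :=
    (hs.braid i (by omega)).trans (mul_assoc _ _ _)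
  have hleft := hs.commute_consecutiveProd (i := i + 1) (j := j) (m := i)
    (by omega) (by omega) (.inr (by omega))
  have hright := hs.commute_consecutiveProd (i := i) (j := i + 1 + 1) (m := m + 1)
    (by omega) hm (.inl (by omega))
  exact SemiconjBy.mul_left hleft (SemiconjBy.mul_left hbraid hright)

theorem semiconjBy_consecutiveProd (hs : IsCoxeterFamily s N) {j k l m : ℕ} (hjk : j ≤ k)
    (hkl : k ≤ l) (hlm : l ≤ m) (hm : m < N) :
    SemiconjBy (consecutiveProd s j (m + 1)) (consecutiveProd s k l)
      (consecutiveProd s (k + 1) (l + 1)) := by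
  induction l, hkl using Nat.le_induction with
  | base => simp only [consecutiveProd_self, SemiconjBy.one_right]
  | succ l hkl ih =>
    rw [consecutiveProd_succ_right s hkl, consecutiveProd_succ_right s (by omega : k + 1 ≤ l + 1)]
    exact (ih (by omega)).mul_right (hs.semiconjBy_consecutiveProd_succ (by omega) hlm hm)

theorem consecutiveProd_mul (hs : IsCoxeterFamily s N) {j k m : ℕ} (hjk : j ≤ k) (hkm : k ≤ m)
    (hm : m < N) :
    consecutiveProd s j (m + 1) * consecutiveProd s k (m + 1) =
      consecutiveProd s (k + 1) (m + 1) * consecutiveProd s j m :=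
  calc consecutiveProd s j (m + 1) * consecutiveProd s k (m + 1)
    _ = consecutiveProd s j (m + 1) * consecutiveProd s k m * s m := by
      rw [consecutiveProd_succ_right s hkm, mul_assoc]
    _ = consecutiveProd s (k + 1) (m + 1) * (consecutiveProd s j m * s m) * s m := by
      rw [(hs.semiconjBy_consecutiveProd hjk hkm le_rfl hm).eq,
        consecutiveProd_succ_right s (hjk.trans hkm)]
    _ = consecutiveProd s (k + 1) (m + 1) * consecutiveProd s j m := by
      rw [mul_assoc, mul_assoc, hs.sq m hm, mul_one]

theorem consecutiveProd_pow_succ (hs : IsCoxeterFamily s N) {j d r : ℕ} (hr : r ≤ d + 1)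
    (hd : j + d < N) :
    consecutiveProd s j (j + d + 1) ^ (r + 1) =
      consecutiveProd s (j + r) (j + d + 1) * consecutiveProd s j (j + d) ^ r := by
  induction r with
  | zero => simp
  | succ r ih =>
    rw [pow_succ', ih (by omega), ← mul_assoc,
      hs.consecutiveProd_mul (by omega) (by omega) hd, mul_assoc, ← pow_succ', add_assoc j r 1]

theorem consecutiveProd_pow_eq_one (hs : IsCoxeterFamily s N) {j d : ℕ} (hd : j + d ≤ N) :
    consecutiveProd s j (j + d) ^ (d + 1) = 1 := by
  induction d with
  | zero => simp [consecutiveProd_self]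
  | succ d ih =>
    rw [← add_assoc, hs.consecutiveProd_pow_succ le_rfl (by omega), ih (by omega), mul_one,
      ← add_assoc, consecutiveProd_self]

end IsCoxeterFamily

section CosetSum

variable {K R : Type*} [CommRing K] [Ring R] [Algebra K R]

/-- The sum of `q ^ (m - k) • s k ⋯ s (m - 1)` over `j ≤ k ≤ m`. For `j = 0` it runs over the
minimal length representatives of the left cosets of `S_m` in `S_{m+1}`. -/
def cosetSum (q : K) (s : ℕ → R) (j m : ℕ) : R :=
  ∑ k ∈ Ico j (m + 1), q ^ (m - k) • consecutiveProd s k m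

variable (q : K)

theorem cosetSum_self (s : ℕ → R) (m : ℕ) : cosetSum q s m m = 1 := by
  simp [cosetSum, consecutiveProd_self]

theorem cosetSum_eq_add (s : ℕ → R) {j m : ℕ} (h : j ≤ m) :
    cosetSum q s j m = q ^ (m - j) • consecutiveProd s j m + cosetSum q s (j + 1) m :=
  sum_eq_sum_Ico_succ_bot (Nat.lt_succ_of_le h) _

variable {s : ℕ → R} {N : ℕ}

namespace IsCoxeterFamily

theorem consecutiveProd_mul_cosetSum (hs : IsCoxeterFamily s N) {j m : ℕ} (hj : j ≤ m)
    (hm : m < N) :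
    consecutiveProd s j (m + 1) * cosetSum q s j (m + 1) =
      q • (cosetSum q s (j + 1) (m + 1) * consecutiveProd s j m) + consecutiveProd s j (m + 1) := by
  rw [cosetSum, sum_Ico_succ_top (by omega), mul_add, cosetSum, ← sum_Ico_add' _ j (m + 1) 1,
    mul_sum, sum_mul, smul_sum]
  congr 1
  · refine sum_congr rfl fun k hk => ?_
    rw [mem_Ico] at hk
    rw [mul_smul_comm, hs.consecutiveProd_mul hk.1 (by omega) hm, smul_mul_assoc, smul_smul,
      ← pow_succ', show m + 1 - (k + 1) + 1 = m + 1 - k by omega]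
  · rw [Nat.sub_self, pow_zero, one_smul, consecutiveProd_self, mul_one]

theorem one_sub_mul_cosetSum (hs : IsCoxeterFamily s N) {j d : ℕ} (hd : j + d < N) :
    (1 - q ^ (d + 1) • consecutiveProd s j (j + d + 1)) * cosetSum q s j (j + d + 1) =
      cosetSum q s (j + 1) (j + d + 1) * (1 - q ^ (d + 2) • consecutiveProd s j (j + d)) := by
  have hfirst : cosetSum q s j (j + d + 1) =
      q ^ (d + 1) • consecutiveProd s j (j + d + 1) + cosetSum q s (j + 1) (j + d + 1) := by
    rw [cosetSum_eq_add q s (by omega), show j + d + 1 - j = d + 1 by omega]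
  rw [sub_mul, one_mul, smul_mul_assoc, hs.consecutiveProd_mul_cosetSum q (by omega) hd, mul_sub,
    mul_one, mul_smul_comm, hfirst, smul_add, smul_smul, ← pow_succ]
  abel

theorem hasLeftInverseUpTo_cosetSum (hs : IsCoxeterFamily s N) {j d : ℕ} (hd : j + d ≤ N) :
    HasLeftInverseUpTo (∏ i ∈ Icc 1 d, (1 - q ^ (i ^ 2 + i))) (cosetSum q s j (j + d)) := by
  induction d generalizing j with
  | zero => simpa [cosetSum_self] using HasLeftInverseUpTo.one
  | succ d ih =>
    have hrest := ih (j := j + 1) (by omega)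
    have hcycle := HasLeftInverseUpTo.one_sub_smul
      (hs.consecutiveProd_pow_eq_one (by omega : j + d ≤ N)) (q ^ (d + 2))
    have hmul := hrest.mul hcycle
    rw [add_right_comm, ← hs.one_sub_mul_cosetSum q (by omega), ← pow_mul,
      show (d + 2) * (d + 1) = (d + 1) ^ 2 + (d + 1) by ring] at hmul
    rw [prod_Icc_succ_top (by omega)]
    exact hmul.of_mul

end IsCoxeterFamily

end CosetSum

section AdjacentTranspositions

variable {n : ℕ}

/-- The transposition of `i` and `i + 1` in `Fin n`, trivial when `i + 1` is out of range. -/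
def adjSwap (n i : ℕ) : Perm (Fin n) :=
  if h : i + 1 < n then swap ⟨i, by omega⟩ ⟨i + 1, h⟩ else 1

theorem adjSwap_of_lt {i : ℕ} (h : i + 1 < n) :
    adjSwap n i = swap ⟨i, by omega⟩ ⟨i + 1, h⟩ :=
  dif_pos h

theorem adjSwap_apply_of_ne {i : ℕ} {x : Fin n} (h₁ : (x : ℕ) ≠ i) (h₂ : (x : ℕ) ≠ i + 1) :
    adjSwap n i x = x := by
  unfold adjSwap
  split_ifs
  · exact swap_apply_of_ne_of_ne (Fin.ne_of_val_ne h₁) (Fin.ne_of_val_ne h₂)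
  · rfl

theorem swap_braid {α : Type*} [DecidableEq α] {x y z : α} (hxy : x ≠ y) (hxz : x ≠ z)
    (hyz : y ≠ z) : swap x y * swap y z * swap x y = swap y z * swap x y * swap y z := by
  rw [swap_mul_swap_mul_swap hxy hxz, swap_comm x y, swap_comm y z,
    swap_mul_swap_mul_swap hyz.symm hxz.symm, swap_comm]

theorem isCoxeterFamily_adjSwap (n : ℕ) : IsCoxeterFamily (adjSwap n) (n - 1) where
  sq i hi := by rw [adjSwap_of_lt (by omega), swap_mul_self]
  comm i j hij hj := by
    rw [adjSwap_of_lt (by omega), adjSwap_of_lt (by omega)]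
    refine (Perm.disjoint_swap_swap ?_).commute
    simp
    omega
  braid i hi := by
    rw [adjSwap_of_lt (by omega), adjSwap_of_lt (by omega)]
    exact swap_braid (by simp) (by simp [add_assoc]) (by simp)

theorem consecutiveProd_adjSwap_apply_of_notMem {k m : ℕ} {x : Fin n} (hx : (x : ℕ) ∉ Icc k m) :
    consecutiveProd (adjSwap n) k m x = x := by
  suffices h : consecutiveProd (adjSwap n) k m ∈ MulAction.stabilizer (Perm (Fin n)) x from h
  refine list_prod_mem fun g hg => ?_
  obtain ⟨i, hi, rfl⟩ := List.mem_map.mp hg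
  rw [List.Ico.mem] at hi
  rw [mem_Icc] at hx
  exact adjSwap_apply_of_ne (by omega) (by omega)

theorem consecutiveProd_adjSwap_apply_top {k m : ℕ} (hk : k ≤ m) (hm : m < n) :
    consecutiveProd (adjSwap n) k m ⟨m, hm⟩ = ⟨k, by omega⟩ := by
  induction m, hk using Nat.le_induction with
  | base => rw [consecutiveProd_self, Perm.one_apply]
  | succ m hk ih =>
    rw [consecutiveProd_succ_right _ hk, Perm.mul_apply, adjSwap_of_lt hm, swap_apply_right, ih]

end AdjacentTranspositions

section Inversions

variable {n : ℕ}

/-- The inversions of a permutation of `Fin n`, as pairs of positions in increasing order. -/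
def inversions (π : Perm (Fin n)) : Finset (Fin n × Fin n) :=
  univ.filter fun p => p.1 < p.2 ∧ π p.2 < π p.1

theorem mem_inversions {π : Perm (Fin n)} {p : Fin n × Fin n} :
    p ∈ inversions π ↔ p.1 < p.2 ∧ π p.2 < π p.1 := by
  simp [inversions]

theorem inversions_one : inversions (1 : Perm (Fin n)) = ∅ := by
  ext p
  simpa [mem_inversions] using le_of_lt

theorem card_inversions_swap_mul {i j : Fin n} (hij : (j : ℕ) = i + 1) {π : Perm (Fin n)}
    (h : π⁻¹ i < π⁻¹ j) : #(inversions (swap i j * π)) = #(inversions π) + 1 := by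
  have hnew : (π⁻¹ i, π⁻¹ j) ∉ inversions π := by
    simp only [mem_inversions, Perm.coe_inv, apply_symm_apply, Fin.lt_def]
    omega
  -- No value lies strictly between `i` and `j`, so no other pair changes its order.
  rw [← card_insert_of_notMem hnew]
  congr 1
  ext ⟨a, b⟩
  obtain ⟨x, rfl⟩ := π⁻¹.surjective a
  obtain ⟨y, rfl⟩ := π⁻¹.surjective b
  simp only [mem_insert, mem_inversions, Prod.mk.injEq, EmbeddingLike.apply_eq_iff_eq,
    Perm.mul_apply, Perm.coe_inv, apply_symm_apply, swap_apply_def] at h ⊢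
  grind

/-- The copy of the symmetric group `S_m` in `S_n`: the permutations of `Fin n` fixing every index
that is at least `m`. -/
def permsFixingFrom (n m : ℕ) : Finset (Perm (Fin n)) :=
  univ.filter fun π => ∀ i : Fin n, m ≤ i → π i = i

theorem mem_permsFixingFrom {m : ℕ} {π : Perm (Fin n)} :
    π ∈ permsFixingFrom n m ↔ ∀ i : Fin n, m ≤ i → π i = i := by
  simp [permsFixingFrom]

theorem permsFixingFrom_zero : permsFixingFrom n 0 = {1} := by
  ext π
  simp [mem_permsFixingFrom, Perm.ext_iff]

theorem permsFixingFrom_self : permsFixingFrom n n = univ := by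
  ext π
  simp only [mem_permsFixingFrom, mem_univ, iff_true]
  omega

theorem apply_lt_iff_of_mem_permsFixingFrom {m : ℕ} {π : Perm (Fin n)}
    (hπ : π ∈ permsFixingFrom n m) (i : Fin n) : (π i : ℕ) < m ↔ (i : ℕ) < m := by
  rw [mem_permsFixingFrom] at hπ
  rw [← not_le, ← not_le, not_iff_not]
  refine ⟨fun h => ?_, fun h => (hπ i h).symm ▸ h⟩
  rwa [π.injective (hπ _ h)] at h

theorem consecutiveProd_mul_mem_permsFixingFrom_iff {k m : ℕ} (hk : k ≤ m) (hm : m < n)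
    {ρ : Perm (Fin n)} :
    (consecutiveProd (adjSwap n) k m * ρ ∈ permsFixingFrom n (m + 1) ∧
      (consecutiveProd (adjSwap n) k m * ρ) ⟨m, hm⟩ = ⟨k, by omega⟩) ↔
      ρ ∈ permsFixingFrom n m := by
  have hfix (x : Fin n) (hx : m < x) : consecutiveProd (adjSwap n) k m x = x :=
    consecutiveProd_adjSwap_apply_of_notMem (by rw [mem_Icc]; omega)
  have habove (x : Fin n) (hx : m < x) : consecutiveProd (adjSwap n) k m (ρ x) = x ↔ ρ x = x := by
    rw [← (consecutiveProd (adjSwap n) k m).apply_eq_iff_eq (x := ρ x), hfix x hx]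
  have htop : consecutiveProd (adjSwap n) k m (ρ ⟨m, hm⟩) = ⟨k, by omega⟩ ↔
      ρ ⟨m, hm⟩ = ⟨m, hm⟩ := by
    rw [← (consecutiveProd (adjSwap n) k m).apply_eq_iff_eq (x := ρ _),
      consecutiveProd_adjSwap_apply_top hk hm]
  simp only [mem_permsFixingFrom, Perm.mul_apply, htop]
  refine ⟨fun h x hx => ?_, fun h => ⟨fun x hx => (habove x hx).mpr (h x (by omega)), h _ le_rfl⟩⟩
  rcases hx.eq_or_lt with rfl | hlt
  · exact h.2
  · exact (habove x hlt).mp (h.1 x hlt)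

theorem card_inversions_consecutiveProd_mul {k m : ℕ} (hk : k ≤ m) (hm : m < n)
    {ρ : Perm (Fin n)} (hρ : ρ ∈ permsFixingFrom n m) :
    #(inversions (consecutiveProd (adjSwap n) k m * ρ)) = m - k + #(inversions ρ) := by
  induction hk using Nat.decreasingInduction with
  | self => simp [consecutiveProd_self]
  | of_succ k hk ih =>
    obtain ⟨hπ, hlast⟩ := (consecutiveProd_mul_mem_permsFixingFrom_iff hk hm).mpr hρ
    set π := consecutiveProd (adjSwap n) (k + 1) m * ρ
    have hlast' : π⁻¹ ⟨k + 1, by omega⟩ = ⟨m, hm⟩ := by rw [Perm.inv_eq_iff_eq, hlast]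
    have hlt : π⁻¹ ⟨k, by omega⟩ < π⁻¹ ⟨k + 1, by omega⟩ := by
      refine lt_of_le_of_ne ?_ fun h => by simpa using π⁻¹.injective h
      rw [hlast', Fin.le_def, ← Nat.lt_succ_iff, ← apply_lt_iff_of_mem_permsFixingFrom hπ,
        Perm.coe_inv, apply_symm_apply]
      exact Nat.lt_succ_of_lt hk
    rw [consecutiveProd_eq_mul _ hk, mul_assoc, adjSwap_of_lt (by omega),
      card_inversions_swap_mul rfl hlt, ih]
    omega

end Inversions

theorem prod_range_prod_Icc {M : Type*} [CommMonoid M] (f : ℕ → M) (n : ℕ) :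
    ∏ j ∈ range n, ∏ i ∈ Icc 1 j, f i = ∏ i ∈ Icc 1 (n - 1), f i ^ (n - i) := by
  rw [prod_comm' (t' := Icc 1 (n - 1)) (s' := fun i => Ico i n)]
  · simp only [prod_const, Nat.card_Ico]
  · intro j i
    simp only [mem_range, mem_Icc, mem_Ico]
    omega

section InversionSum

variable {K R : Type*} [CommRing K] [Ring R] [Algebra K R] {n : ℕ} (q : K)
  (u : Perm (Fin n) →* R)

theorem sum_permsFixingFrom_succ {m : ℕ} (hm : m < n) :
    ∑ π ∈ permsFixingFrom n (m + 1), q ^ #(inversions π) • u π =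
      cosetSum q (u ∘ adjSwap n) 0 m *
        ∑ ρ ∈ permsFixingFrom n m, q ^ #(inversions ρ) • u ρ := by
  have hmaps : ∀ π ∈ permsFixingFrom n (m + 1), (π ⟨m, hm⟩ : ℕ) ∈ Ico 0 (m + 1) := fun π hπ =>
    mem_Ico.mpr ⟨Nat.zero_le _, (apply_lt_iff_of_mem_permsFixingFrom hπ _).mpr m.lt_succ_self⟩
  rw [← sum_fiberwise_of_maps_to hmaps, cosetSum, sum_mul]
  refine sum_congr rfl fun k hk => ?_
  have hkm : k ≤ m := Nat.lt_succ_iff.mp (mem_Ico.mp hk).2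
  rw [mul_sum]
  refine (sum_equiv (Equiv.mulLeft (consecutiveProd (adjSwap n) k m)) (fun ρ => ?_)
    fun ρ hρ => ?_).symm
  · rw [← consecutiveProd_mul_mem_permsFixingFrom_iff hkm hm, mem_filter, coe_mulLeft, Fin.ext_iff]
  · rw [coe_mulLeft, card_inversions_consecutiveProd_mul hkm hm hρ, ← map_consecutiveProd,
      smul_mul_smul_comm, map_mul, pow_add]

theorem hasLeftInverseUpTo_sum_permsFixingFrom {m : ℕ} (hm : m ≤ n) :
    HasLeftInverseUpTo (∏ j ∈ range m, ∏ i ∈ Icc 1 j, (1 - q ^ (i ^ 2 + i)))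
      (∑ π ∈ permsFixingFrom n m, q ^ #(inversions π) • u π) := by
  induction m with
  | zero => simpa [permsFixingFrom_zero, inversions_one] using HasLeftInverseUpTo.one
  | succ m ih =>
    have hcoset := ((isCoxeterFamily_adjSwap n).map u).hasLeftInverseUpTo_cosetSum q
      (by omega : 0 + m ≤ n - 1)
    rw [zero_add] at hcoset
    rw [sum_permsFixingFrom_succ q u hm, prod_range_succ, mul_comm]
    exact hcoset.mul (ih (by omega))

theorem hasLeftInverseUpTo_sum_perm :
    HasLeftInverseUpTo (∏ i ∈ Icc 1 (n - 1), (1 - q ^ (i ^ 2 + i)) ^ (n - i))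
      (∑ π : Perm (Fin n), q ^ #(inversions π) • u π) := by
  simpa only [permsFixingFrom_self, prod_range_prod_Icc] using
    hasLeftInverseUpTo_sum_permsFixingFrom q u le_rfl

end InversionSum

section Matrices

/-- The right regular representation of a finite group on functions on the group, as matrices:
`g` has entry `1` at `(a, b)` exactly when `a * g = b`. -/
def rightRegularMatrix (K G : Type*) [Semiring K] [Group G] [Fintype G] [DecidableEq G] :
    G →* Matrix G G K where
  toFun g := (Equiv.mulRight g).permMatrix K
  map_one' := by rw [Equiv.mulRight_one, Matrix.permMatrix_one]
  map_mul' g h := by rw [Equiv.mulRight_mul, Matrix.permMatrix_mul]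

theorem sum_smul_rightRegularMatrix {K G : Type*} [Semiring K] [Group G] [Fintype G]
    [DecidableEq G] (f : G → K) :
    ∑ g, f g • rightRegularMatrix K G g = Matrix.of fun a b => f (a⁻¹ * b) := by
  ext a b
  simp [rightRegularMatrix, Matrix.sum_apply, ← eq_inv_mul_iff_mul_eq]

theorem matrix_mul_eq_smul_one_comm {K ι : Type*} [CommRing K] [Fintype ι] [DecidableEq ι]
    {A B : Matrix ι ι K} {d : K} (hd : d ∈ nonZeroDivisors K) (h : A * B = d • 1) :
    B * A = d • 1 := by
  have hleft : IsLeftRegular B := by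
    refine IsLeftRegular.of_mul (a := A) fun X Y hXY => ?_
    have hsmul : d • X = d • Y := by simpa only [h, smul_mul_assoc, one_mul] using hXY
    exact (isLeftRegular_iff_mem_nonZeroDivisorsLeft.mpr hd.1).matrix hsmul
  have hright : IsRightRegular B := Matrix.isLeftRegular_iff_isRightRegular.mp hleft
  apply hright
  simp only [mul_assoc, h, mul_smul_comm, smul_mul_assoc, mul_one, one_mul]

/-- The Gram matrix of the `n`-particle quon states with all deformation parameters equal to
`q`. -/
def quonGram {K : Type*} [Monoid K] (n : ℕ) (q : K) : Matrix (Perm (Fin n)) (Perm (Fin n)) K :=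
  Matrix.of fun σ τ => q ^ inv_count σ τ

theorem sum_inversions_smul_rightRegularMatrix {K : Type*} [Semiring K] (n : ℕ) (q : K) :
    ∑ π, q ^ #(inversions π) • rightRegularMatrix K (Perm (Fin n)) π = (quonGram n q).transpose :=
  sum_smul_rightRegularMatrix fun π => q ^ #(inversions π)

end Matrices

theorem extended_zagier_general {K : Type*} [CommRing K] (n : ℕ) {q : K}
    (hq : ∀ i ∈ Icc 1 (n - 1), 1 - q ^ (i ^ 2 + i) ∈ nonZeroDivisors K) :
    ∃ N : Matrix (Perm (Fin n)) (Perm (Fin n)) K,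
      quonGram n q * N = (∏ i ∈ Icc 1 (n - 1), (1 - q ^ (i ^ 2 + i)) ^ (n - i)) • 1 ∧
      N * quonGram n q = (∏ i ∈ Icc 1 (n - 1), (1 - q ^ (i ^ 2 + i)) ^ (n - i)) • 1 := by
  obtain ⟨N, hN⟩ := hasLeftInverseUpTo_sum_perm q (rightRegularMatrix K (Perm (Fin n)))
  rw [sum_inversions_smul_rightRegularMatrix] at hN
  have hright := congrArg Matrix.transpose hN
  rw [Matrix.transpose_mul, Matrix.transpose_transpose, Matrix.transpose_smul,
    Matrix.transpose_one] at hright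
  exact ⟨N.transpose, hright, matrix_mul_eq_smul_one_comm
    (prod_mem fun i hi => pow_mem (hq i hi) _) hright⟩

theorem one_sub_X_pow_mem_nonZeroDivisors {K : Type*} [CommRing K] {k : ℕ} (hk : k ≠ 0) :
    (1 - Polynomial.X ^ k : Polynomial K) ∈ nonZeroDivisors (Polynomial K) := by
  rw [← neg_sub, ← neg_one_mul]
  exact mul_mem isUnit_one.neg.mem_nonZeroDivisors
    (Polynomial.monic_X_pow_sub_C 1 hk).mem_nonZeroDivisors

/-- Extended Zagier conjecture: the inverse of the matrix `(q^{ι(σ,τ)})_{σ,τ}`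
has entries with denominator dividing `∏_{i=1}^{n−1} (1 − q^{i²+i})^{n−i}`. -/
theorem extended_zagier (n : ℕ) (hn : 2 ≤ n) :
    ∃ N : Matrix (Equiv.Perm (Fin n)) (Equiv.Perm (Fin n)) (Polynomial ℤ),
      (Matrix.of fun σ τ : Equiv.Perm (Fin n) =>
          (Polynomial.X : Polynomial ℤ) ^ inv_count σ τ) * N =
        (∏ i ∈ Finset.Icc 1 (n - 1),
            (1 - (Polynomial.X : Polynomial ℤ) ^ (i ^ 2 + i)) ^ (n - i)) •
          (1 : Matrix (Equiv.Perm (Fin n)) (Equiv.Perm (Fin n)) (Polynomial ℤ)) ∧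
      N * (Matrix.of fun σ τ : Equiv.Perm (Fin n) =>
          (Polynomial.X : Polynomial ℤ) ^ inv_count σ τ) =
        (∏ i ∈ Finset.Icc 1 (n - 1),
            (1 - (Polynomial.X : Polynomial ℤ) ^ (i ^ 2 + i)) ^ (n - i)) •
          (1 : Matrix (Equiv.Perm (Fin n)) (Equiv.Perm (Fin n)) (Polynomial ℤ)) :=
  extended_zagier_general n fun i hi =>
    one_sub_X_pow_mem_nonZeroDivisors (by have hpos := (mem_Icc.mp hi).1; omega)
end
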